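/- arXiv:2304.10696 — 4 statements merged into one kernel-verified Lean document; each statement's English description precedes it below -/
import Mathlib

section
/- Let N be a positive integer and let Q_N be the quadratic form on the 3-dimensional ℚ-vector space ℚ³ given by Q_N(a, b, c) = −N·a² − b·c (the restriction of the determinant form to the matrices [[−Na, b], [c, a]]). Let e₁, e₂, e₃ be the standard basis of ℚ³ and ι : ℚ³ → CliffordAlgebra Q_N the canonical embedding. Then there is a ℚ-algebra isomorphism from the even Clifford algebra of Q_N onto the matrix algebra M₂(ℚ) sending ι(e₁)ι(e₂) to [[0,1],[0,0]], ι(e₁)ι(e₃) to [[0,0],[−N,0]], and ι(e₂)ι(e₃) to [[−1,0],[0,0]]; moreover this isomorphism carries the restriction to the even part of the reversal anti-automorphism of CliffordAlgebra Q_N to the adjugate involution g ↦ adjugate(g) of M₂(ℚ). -/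
open CliffordAlgebra

/-- The quadratic form `Q_N(a, b, c) = -N·a² - b·c` on `ℚ³`, the determinant form on the
space of matrices `[[-Na, b], [c, a]]`. -/
noncomputable def QN (N : ℕ) : QuadraticForm ℚ (Fin 3 → ℚ) :=
  Matrix.toQuadraticMap' !![-(N : ℚ), 0, 0; 0, 0, -1; 0, 0, 0]

/-!
Send `v = (a, b, c)` to the matrix `φ v = [[-na, b], [c, a]]`, so that `Q v = det (φ v)`. Since
`adj g * g = det g`, the bilinear map `(u, v) ↦ adj (φ u) * φ v` satisfies the relations of the
even Clifford algebra, and since `adj (adj (φ u) * φ v) = adj (φ v) * φ u`, the induced homomorphism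
to `M₂` turns reversal into the adjugate.

For the inverse, `x = ι e₁ ι e₂` and `y = -n⁻¹ ι e₁ ι e₃` satisfy `x² = y² = 0` and `xy + yx = 1`,
so `xy, x, y, yx` multiply like the matrix units of `M₂`. The two homomorphisms are mutually inverse
because `Q e₁ = -n` is a unit, which makes the products `ι e₁ ι v` generate the even part.
-/

section HyperbolicPair

variable {R A : Type*} [CommRing R] [Ring A] [Algebra R A]

/-- The algebra homomorphism `M₂(R) → A` determined by a hyperbolic pair, that is, by square-zero
elements `x`, `y` with `x * y + y * x = 1`; these are the images of the off-diagonal matrix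
units `E₁₂` and `E₂₁`. -/
def hyperbolicPairLift (x y : A) (hx : x * x = 0) (hy : y * y = 0) (hxy : x * y + y * x = 1) :
    Matrix (Fin 2) (Fin 2) R →ₐ[R] A :=
  AlgHom.ofLinearMap
    { toFun := fun m ↦ m 0 0 • (x * y) + m 0 1 • x + m 1 0 • y + m 1 1 • (y * x)
      map_add' := fun m m' ↦ by simp only [Matrix.add_apply]; module
      map_smul' := fun r m ↦ by
        simp only [Matrix.smul_apply, smul_eq_mul, RingHom.id_apply]; module }
    (by simpa using hxy)
    (fun m m' ↦ by
      have xx (w : A) : x * (x * w) = 0 := by rw [← mul_assoc, hx, zero_mul]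
      have yy (w : A) : y * (y * w) = 0 := by rw [← mul_assoc, hy, zero_mul]
      have xyx : x * (y * x) = x := by
        rw [eq_sub_of_add_eq' hxy, mul_sub, mul_one, xx, sub_zero]
      have yxy : y * (x * y) = y := by
        rw [eq_sub_of_add_eq hxy, mul_sub, mul_one, yy, sub_zero]
      simp only [LinearMap.coe_mk, AddHom.coe_mk, Matrix.mul_apply, Fin.sum_univ_two, mul_add,
        add_mul, smul_mul_assoc, mul_smul_comm, mul_assoc, hx, hy, xx, yy, xyx, yxy, mul_zero,
        smul_zero]
      module)

theorem hyperbolicPairLift_apply {x y : A} (hx : x * x = 0) (hy : y * y = 0)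
    (hxy : x * y + y * x = 1) (m : Matrix (Fin 2) (Fin 2) R) :
    hyperbolicPairLift x y hx hy hxy m =
      m 0 0 • (x * y) + m 0 1 • x + m 1 0 • y + m 1 1 • (y * x) :=
  rfl

end HyperbolicPair

section EvenHom

variable {R M A : Type*} [CommRing R] [AddCommGroup M] [Module R M] [Ring A] [Algebra R A]
  {Q : QuadraticForm R M}

theorem evenHom_bilin_add_swap (f : EvenHom Q A) (u v : M) :
    f.bilin u v + f.bilin v u = algebraMap R A (QuadraticMap.polar Q u v) := by
  rw [QuadraticMap.polar, map_sub, map_sub, ← f.contract (u + v)]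
  simp only [map_add, LinearMap.add_apply, f.contract]
  abel

theorem evenHom_bilin_mul_bilin_of_isOrtho (f : EvenHom Q A) {e u : M} (h : Q.IsOrtho e u)
    (v : M) : f.bilin e u * f.bilin e v = -(Q e • f.bilin u v) := by
  have swap : f.bilin e u = -f.bilin u e := by
    rw [eq_neg_iff_add_eq_zero, evenHom_bilin_add_swap, h.polar_eq_zero, map_zero]
  rw [swap, neg_mul, f.contract_mid]

theorem evenHom_bilin_mul_self_of_isOrtho (f : EvenHom Q A) {e u : M} (h : Q.IsOrtho e u) :
    f.bilin e u * f.bilin e u = -algebraMap R A (Q e * Q u) := by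
  rw [evenHom_bilin_mul_bilin_of_isOrtho f h, f.contract, Algebra.smul_def, map_mul]

theorem evenHom_bilin_mul_add_swap_of_isOrtho (f : EvenHom Q A) {e u v : M} (hu : Q.IsOrtho e u)
    (hv : Q.IsOrtho e v) :
    f.bilin e u * f.bilin e v + f.bilin e v * f.bilin e u =
      -algebraMap R A (Q e * QuadraticMap.polar Q u v) := by
  rw [evenHom_bilin_mul_bilin_of_isOrtho f hu, evenHom_bilin_mul_bilin_of_isOrtho f hv, ← neg_add,
    ← smul_add, evenHom_bilin_add_swap, Algebra.smul_def, map_mul]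

theorem evenHom_ext_of_isUnit {e : M} (he : IsUnit (Q e)) {f g : EvenHom Q A}
    (h : f.bilin e = g.bilin e) : f = g := by
  have swap (f : EvenHom Q A) (u : M) :
      f.bilin u e = algebraMap R A (QuadraticMap.polar Q u e) - f.bilin e u :=
    eq_sub_of_add_eq (evenHom_bilin_add_swap f u e)
  refine EvenHom.ext (LinearMap.ext₂ fun u v ↦ he.smul_left_cancel.mp ?_)
  rw [← f.contract_mid, ← g.contract_mid, swap, swap, h]

end EvenHom

section Det

variable {R M : Type*} [CommRing R]

theorem adjugate_add_fin_two (g h : Matrix (Fin 2) (Fin 2) R) :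
    (g + h).adjugate = g.adjugate + h.adjugate := by
  simp [Matrix.adjugate_fin_two, add_comm]

variable [AddCommGroup M] [Module R M] {Q : QuadraticForm R M}

/-- The even homomorphism `(u, v) ↦ adj (φ u) * φ v` attached to a realisation `φ` of `Q` as the
determinant form on a space of `2 × 2` matrices. -/
def detEvenHom (φ : M →ₗ[R] Matrix (Fin 2) (Fin 2) R) (hφ : ∀ v, (φ v).det = Q v) :
    EvenHom Q (Matrix (Fin 2) (Fin 2) R) where
  bilin := LinearMap.mk₂ R (fun u v ↦ (φ u).adjugate * φ v)
    (fun u u' v ↦ by rw [map_add, adjugate_add_fin_two, add_mul])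
    (fun r u v ↦ by simp [Matrix.adjugate_smul])
    (fun u v v' ↦ by rw [map_add, mul_add])
    (fun r u v ↦ by rw [map_smul, mul_smul_comm])
  contract v := by
    rw [LinearMap.mk₂_apply, Matrix.adjugate_mul, hφ, Algebra.algebraMap_eq_smul_one]
  contract_mid u v w := by
    simp only [LinearMap.mk₂_apply]
    rw [mul_assoc, ← mul_assoc (φ v), Matrix.mul_adjugate, hφ, smul_one_mul, mul_smul_comm]

theorem detEvenHom_bilin_apply (φ : M →ₗ[R] Matrix (Fin 2) (Fin 2) R)
    (hφ : ∀ v, (φ v).det = Q v) (u v : M) :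
    (detEvenHom φ hφ).bilin u v = (φ u).adjugate * φ v :=
  rfl

theorem adjugate_detEvenHom_bilin (φ : M →ₗ[R] Matrix (Fin 2) (Fin 2) R)
    (hφ : ∀ v, (φ v).det = Q v) (u v : M) :
    ((detEvenHom φ hφ).bilin u v).adjugate = (detEvenHom φ hφ).bilin v u := by
  simp only [detEvenHom_bilin_apply, Matrix.adjugate_mul_distrib]
  rw [Matrix.adjugate_adjugate _ (by simp)]
  simp

theorem lift_detEvenHom_of_coe_eq_reverse (φ : M →ₗ[R] Matrix (Fin 2) (Fin 2) R)
    (hφ : ∀ v, (φ v).det = Q v) {x y : even Q}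
    (hxy : (y : CliffordAlgebra Q) = reverse (Q := Q) (x : CliffordAlgebra Q)) :
    even.lift Q (detEvenHom φ hφ) y = (even.lift Q (detEvenHom φ hφ) x).adjugate := by
  set F := even.lift Q (detEvenHom φ hφ)
  obtain ⟨x, hx⟩ := x
  induction x, hx using even_induction generalizing y with
  | algebraMap r =>
    obtain rfl : y = algebraMap R (even Q) r := Subtype.ext (hxy.trans (reverse.commutes r))
    change F (algebraMap R (even Q) r) = (F (algebraMap R (even Q) r)).adjugate
    simp [Algebra.algebraMap_eq_smul_one, Matrix.adjugate_smul]
  | add x₁ x₂ hx₁ hx₂ ih₁ ih₂ =>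
    let y₁ : even Q := ⟨reverse x₁, (reverse_mem_evenOdd_iff Q).mpr hx₁⟩
    let y₂ : even Q := ⟨reverse x₂, (reverse_mem_evenOdd_iff Q).mpr hx₂⟩
    calc F y
        = F (y₁ + y₂) := congrArg F (Subtype.ext (hxy.trans (map_add _ x₁ x₂)))
      _ = (F ⟨x₁, hx₁⟩ + F ⟨x₂, hx₂⟩).adjugate := by
          rw [map_add, ih₁ (y := y₁) rfl, ih₂ (y := y₂) rfl, adjugate_add_fin_two]
      _ = (F ⟨x₁ + x₂, _⟩).adjugate := by rw [← map_add]; rfl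
  | ι_mul_ι_mul u v x hx ih =>
    let x' : even Q := ⟨reverse x, (reverse_mem_evenOdd_iff Q).mpr hx⟩
    have y_eq : y = x' * (even.ι Q).bilin v u :=
      Subtype.ext (hxy.trans (by simp [x', even.ι]))
    calc F y
        = F x' * F ((even.ι Q).bilin v u) := by rw [y_eq, map_mul]
      _ = (F ((even.ι Q).bilin u v) * F ⟨x, hx⟩).adjugate := by
          rw [ih (y := x') rfl, even.lift_ι, even.lift_ι, Matrix.adjugate_mul_distrib,
            adjugate_detEvenHom_bilin]
      _ = (F ⟨ι Q u * ι Q v * x, _⟩).adjugate := by rw [← map_mul]; rfl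

end Det

section TernaryForm

variable {R : Type*} [CommRing R]

/-- The matrix `[[-na, b], [c, a]]` attached to the vector `(a, b, c)`. -/
def ternaryMatrix (n : R) : (Fin 3 → R) →ₗ[R] Matrix (Fin 2) (Fin 2) R where
  toFun v := !![-n * v 0, v 1; v 2, v 0]
  map_add' u v := by simp [mul_add]
  map_smul' r v := by simp [mul_left_comm]

theorem ternaryMatrix_apply (n : R) (v : Fin 3 → R) :
    ternaryMatrix n v = !![-n * v 0, v 1; v 2, v 0] :=
  rfl

variable {n : R} {Q : QuadraticForm R (Fin 3 → R)}

theorem det_ternaryMatrix (hQ : ∀ v, Q v = -n * v 0 ^ 2 - v 1 * v 2) (v : Fin 3 → R) :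
    (ternaryMatrix n v).det = Q v := by
  rw [ternaryMatrix_apply, Matrix.det_fin_two_of, hQ]
  ring

theorem isOrtho_single_zero (hQ : ∀ v, Q v = -n * v 0 ^ 2 - v 1 * v 2) {i : Fin 3} (hi : i ≠ 0) :
    Q.IsOrtho (Pi.single 0 1) (Pi.single i 1) := by
  rw [QuadraticMap.isOrtho_def]
  fin_cases i <;> simp_all

variable (hQ : ∀ v, Q v = -n * v 0 ^ 2 - v 1 * v 2)

/-- The homomorphism from the even Clifford algebra to `M₂(R)` sending `ι u * ι v` to
`adj (ternaryMatrix n u) * ternaryMatrix n v`. -/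
def evenToMatrix : even Q →ₐ[R] Matrix (Fin 2) (Fin 2) R :=
  even.lift Q (detEvenHom (ternaryMatrix n) (det_ternaryMatrix hQ))

theorem evenToMatrix_ι (u v : Fin 3 → R) :
    evenToMatrix hQ ((even.ι Q).bilin u v) =
      !![-n * u 0 * v 0 - u 1 * v 2, u 0 * v 1 - u 1 * v 0;
        n * (u 2 * v 0 - u 0 * v 2), -n * u 0 * v 0 - u 2 * v 1] := by
  rw [evenToMatrix, even.lift_ι, detEvenHom_bilin_apply, ternaryMatrix_apply, ternaryMatrix_apply,
    Matrix.adjugate_fin_two_of, Matrix.mul_fin_two]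
  ext i j
  fin_cases i <;> fin_cases j <;> simp <;> ring

end TernaryForm

section Equiv

variable {R : Type*} [CommRing R] {n : Rˣ} {Q : QuadraticForm R (Fin 3 → R)}
  (hQ : ∀ v, Q v = -n * v 0 ^ 2 - v 1 * v 2)

/-- The homomorphism from `M₂(R)` to the even Clifford algebra sending `E₁₂` to `ι e₁ * ι e₂` and
`E₂₁` to `-n⁻¹ • (ι e₁ * ι e₃)`. -/
def matrixToEven : Matrix (Fin 2) (Fin 2) R →ₐ[R] even Q :=
  hyperbolicPairLift ((even.ι Q).bilin (Pi.single 0 1) (Pi.single 1 1))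
    (-(↑n⁻¹ : R) • (even.ι Q).bilin (Pi.single 0 1) (Pi.single 2 1))
    (by
      rw [evenHom_bilin_mul_self_of_isOrtho _ (isOrtho_single_zero hQ (by decide))]
      simp [hQ])
    (by
      rw [smul_mul_smul_comm,
        evenHom_bilin_mul_self_of_isOrtho _ (isOrtho_single_zero hQ (by decide))]
      simp [hQ])
    (by
      have polar_eq : QuadraticMap.polar Q (Pi.single 1 1) (Pi.single 2 1) = -1 := by
        simp [QuadraticMap.polar, hQ]
      rw [mul_smul_comm, smul_mul_assoc, ← smul_add,
        evenHom_bilin_mul_add_swap_of_isOrtho _ (isOrtho_single_zero hQ (by decide))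
          (isOrtho_single_zero hQ (by decide)), polar_eq]
      simp [hQ, Algebra.algebraMap_eq_smul_one, smul_smul])

theorem evenToMatrix_comp_matrixToEven :
    (evenToMatrix hQ).comp (matrixToEven hQ) = AlgHom.id R _ := by
  refine AlgHom.ext fun m ↦ ?_
  simp only [AlgHom.comp_apply, matrixToEven, hyperbolicPairLift_apply, map_add, map_smul, map_mul,
    evenToMatrix_ι]
  ext i j
  fin_cases i <;> fin_cases j <;> simp

theorem matrixToEven_comp_evenToMatrix :
    (matrixToEven hQ).comp (evenToMatrix hQ) = AlgHom.id R _ := by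
  have isUnit_Q : IsUnit (Q (Pi.single 0 1)) := by simp [hQ]
  refine even.algHom_ext Q (evenHom_ext_of_isUnit isUnit_Q (LinearMap.pi_ext' fun i ↦
    LinearMap.ext_ring ?_))
  change matrixToEven hQ (evenToMatrix hQ ((even.ι Q).bilin (Pi.single 0 1) (Pi.single i 1))) =
    (even.ι Q).bilin (Pi.single 0 1) (Pi.single i 1)
  match i with
  | 0 => rw [(even.ι Q).contract, AlgHom.commutes, AlgHom.commutes]
  | 1 => simp [evenToMatrix_ι, matrixToEven, hyperbolicPairLift_apply]
  | 2 => simp [evenToMatrix_ι, matrixToEven, hyperbolicPairLift_apply, smul_smul]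

/-- The isomorphism between the even Clifford algebra of `-n a² - b c`, for `n` a unit, and
`M₂(R)`. -/
def evenEquivMatrix : even Q ≃ₐ[R] Matrix (Fin 2) (Fin 2) R :=
  AlgEquiv.ofAlgHom (evenToMatrix hQ) (matrixToEven hQ) (evenToMatrix_comp_matrixToEven hQ)
    (matrixToEven_comp_evenToMatrix hQ)

theorem evenEquivMatrix_apply (x : even Q) : evenEquivMatrix hQ x = evenToMatrix hQ x :=
  rfl

theorem evenEquivMatrix_of_coe_eq {x : even Q} {u v : Fin 3 → R}
    (hx : (x : CliffordAlgebra Q) = ι Q u * ι Q v) :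
    evenEquivMatrix hQ x =
      !![-n * u 0 * v 0 - u 1 * v 2, u 0 * v 1 - u 1 * v 0;
        n * (u 2 * v 0 - u 0 * v 2), -n * u 0 * v 0 - u 2 * v 1] := by
  obtain rfl : x = (even.ι Q).bilin u v := Subtype.ext hx
  rw [evenEquivMatrix_apply, evenToMatrix_ι]

theorem evenEquivMatrix_of_coe_eq_reverse {x y : even Q}
    (hxy : (y : CliffordAlgebra Q) = reverse (Q := Q) (x : CliffordAlgebra Q)) :
    evenEquivMatrix hQ y = (evenEquivMatrix hQ x).adjugate := by
  simp only [evenEquivMatrix_apply, evenToMatrix]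
  exact lift_detEvenHom_of_coe_eq_reverse (ternaryMatrix (n : R)) (det_ternaryMatrix hQ) hxy

end Equiv

theorem statement12_general {R : Type*} [CommRing R] (n : Rˣ)
    (Q : QuadraticForm R (Fin 3 → R)) (hQ : ∀ v, Q v = -n * v 0 ^ 2 - v 1 * v 2) :
    ∃ iso : even Q ≃ₐ[R] Matrix (Fin 2) (Fin 2) R,
      (∀ x : even Q,
        (x : CliffordAlgebra Q) = ι Q (Pi.single 0 1) * ι Q (Pi.single 1 1) →
          iso x = !![0, 1; 0, 0]) ∧
      (∀ x : even Q,
        (x : CliffordAlgebra Q) = ι Q (Pi.single 0 1) * ι Q (Pi.single 2 1) →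
          iso x = !![0, 0; -(n : R), 0]) ∧
      (∀ x : even Q,
        (x : CliffordAlgebra Q) = ι Q (Pi.single 1 1) * ι Q (Pi.single 2 1) →
          iso x = !![-1, 0; 0, 0]) ∧
      (∀ x y : even Q,
        (y : CliffordAlgebra Q) = reverse (Q := Q) (x : CliffordAlgebra Q) →
          iso y = (iso x).adjugate) := by
  refine ⟨evenEquivMatrix hQ, fun x hx ↦ ?_, fun x hx ↦ ?_, fun x hx ↦ ?_,
    fun x y hxy ↦ evenEquivMatrix_of_coe_eq_reverse hQ hxy⟩
  all_goals
    rw [evenEquivMatrix_of_coe_eq hQ hx]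
    simp

theorem QN_apply (N : ℕ) (v : Fin 3 → ℚ) : QN N v = -(N : ℚ) * v 0 ^ 2 - v 1 * v 2 := by
  change Matrix.toQuadraticForm' !![-(N : ℚ), 0, 0; 0, 0, -1; 0, 0, 0] v = _
  simp only [Matrix.toQuadraticForm', LinearMap.BilinMap.toQuadraticMap_apply,
    Matrix.toLinearMap₂'_apply, Fin.sum_univ_three, Matrix.of_apply, Matrix.cons_val, smul_eq_mul]
  ring

/-- For a positive integer `N`, there is a `ℚ`-algebra isomorphism from the
even Clifford algebra of `Q_N` onto `M₂(ℚ)` sending `ι(e₁)ι(e₂) ↦ [[0,1],[0,0]]`,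
`ι(e₁)ι(e₃) ↦ [[0,0],[-N,0]]`, `ι(e₂)ι(e₃) ↦ [[-1,0],[0,0]]`, and carrying the restriction of
the reversal anti-automorphism to the adjugate involution `g ↦ adjugate g` of `M₂(ℚ)`. -/
theorem statement12 (N : ℕ) (hN : 0 < N) :
    ∃ iso : (CliffordAlgebra.even (QN N)) ≃ₐ[ℚ] Matrix (Fin 2) (Fin 2) ℚ,
      (∀ x : CliffordAlgebra.even (QN N),
        (x : CliffordAlgebra (QN N)) =
            ι (QN N) (Pi.single 0 1) * ι (QN N) (Pi.single 1 1) →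
          iso x = !![0, 1; 0, 0]) ∧
      (∀ x : CliffordAlgebra.even (QN N),
        (x : CliffordAlgebra (QN N)) =
            ι (QN N) (Pi.single 0 1) * ι (QN N) (Pi.single 2 1) →
          iso x = !![0, 0; -(N : ℚ), 0]) ∧
      (∀ x : CliffordAlgebra.even (QN N),
        (x : CliffordAlgebra (QN N)) =
            ι (QN N) (Pi.single 1 1) * ι (QN N) (Pi.single 2 1) →
          iso x = !![-1, 0; 0, 0]) ∧
      (∀ x y : CliffordAlgebra.even (QN N),
        (y : CliffordAlgebra (QN N)) = reverse (Q := QN N) (x : CliffordAlgebra (QN N)) →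
          iso y = (iso x).adjugate) := by
  exact statement12_general (Units.mk0 (N : ℚ) (by positivity)) (QN N) (QN_apply N)
end

section
/- Let Q_det be the determinant quadratic form on the 4-dimensional ℚ-vector space M₂(ℚ) of 2×2 matrices (Q_det(x) = det(x)). Then the even Clifford algebra of Q_det is isomorphic as a ℚ-algebra to the product M₂(ℚ) × M₂(ℚ). -/
/-- The determinant of a `2 × 2` matrix as a quadratic form, `Q_det(x) = det x`. -/
noncomputable def detForm (O : Type*) [CommRing O] :
    QuadraticForm O (Matrix (Fin 2) (Fin 2) O) :=
  QuadraticMap.ofPolar (fun x => x.det)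
    (fun a x => by simp [Matrix.det_fin_two, smul_eq_mul]; ring)
    (fun x x' y => by simp [QuadraticMap.polar, Matrix.det_fin_two]; ring)
    (fun a x y => by simp [QuadraticMap.polar, Matrix.det_fin_two, smul_eq_mul]; ring)

/-!
Write `x̄` for the adjugate of `x`. By the universal property of the even Clifford algebra,
`ι x * ι y ↦ (x * ȳ, x̄ * y)` defines a homomorphism to the product of two matrix algebras.

The matrix units, up to sign, form two orthogonal hyperbolic pairs, whose idempotents `ι u * ι v`
commute. Let `z` be the idempotent on which these two agree. Every vector exchanges `z` with
`1 - z`, so `z` is central in the even algebra, and it is sent to `(1, 0)`. The defect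
`ι x * ι 1 * ι y - ι (x * y)` is alternating in `x` and `y` and vanishes for `x = 1`, so three
pairs of matrix units suffice to see that `z` kills it. Hence `x ↦ z * (ι x * ι 1)` and
`y ↦ (1 - z) * (ι 1 * ι y)` are multiplicative, and together they give the inverse homomorphism.
-/

open CliffordAlgebra Matrix

section Idempotents

variable {R : Type*} [Ring R]

/-- The idempotent selecting the part on which two commuting idempotents `p` and `q` agree. The
definition makes sense for arbitrary ring elements. -/
def xnor (p q : R) : R :=
  p * q + (1 - p) * (1 - q)

variable {p q a : R}

theorem commute_one_sub_left (h : Commute p a) : Commute (1 - p) a :=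
  (Commute.one_left a).sub_left h

theorem commute_one_sub_one_sub (h : Commute p q) : Commute (1 - p) (1 - q) :=
  (Commute.one_right (1 - p)).sub_right (commute_one_sub_left h)

theorem isIdempotentElem_xnor (hp : IsIdempotentElem p) (hq : IsIdempotentElem q)
    (hpq : Commute p q) : IsIdempotentElem (xnor p q) := by
  have hpq' : Commute (1 - p) (1 - q) := commute_one_sub_one_sub hpq
  refine (hp.mul_of_commute hpq hq).add (hp.one_sub.mul_of_commute hpq' hq.one_sub) ?_
  have hleft : p * q * ((1 - p) * (1 - q)) = 0 := by
    rw [hpq'.eq, mul_assoc, ← mul_assoc q, hq.mul_one_sub_self, zero_mul, mul_zero]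
  have hright : (1 - p) * (1 - q) * (p * q) = 0 := by
    rw [hpq.eq, mul_assoc, ← mul_assoc (1 - q), hq.one_sub_mul_self, zero_mul, mul_zero]
  rw [hleft, hright, add_zero]

theorem xnor_mul_of_swap_left (hp : p * a = a * (1 - p)) (hq : Commute q a) :
    xnor p q * a = a * (1 - xnor p q) := by
  have hp' : (1 - p) * a = a * p := by rw [sub_mul, hp]; noncomm_ring
  have hq' : (1 - q) * a = a * (1 - q) := (commute_one_sub_left hq).eq
  calc xnor p q * a = p * (q * a) + (1 - p) * ((1 - q) * a) := by
        rw [xnor, add_mul, mul_assoc, mul_assoc]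
    _ = p * a * q + (1 - p) * a * (1 - q) := by rw [hq.eq, hq', mul_assoc, mul_assoc]
    _ = a * (1 - xnor p q) := by rw [hp, hp', xnor]; noncomm_ring

theorem xnor_comm (hpq : Commute p q) : xnor p q = xnor q p := by
  rw [xnor, xnor, hpq.eq, (commute_one_sub_one_sub hpq).eq]

theorem xnor_mul_of_swap_right (hpq : Commute p q) (hp : Commute p a) (hq : q * a = a * (1 - q)) :
    xnor p q * a = a * (1 - xnor p q) := by
  rw [xnor_comm hpq, xnor_mul_of_swap_left hq hp]

theorem xnor_mul_left_eq_xnor_mul_right (hp : IsIdempotentElem p) (hq : IsIdempotentElem q)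
    (hpq : Commute p q) : xnor p q * p = xnor p q * q := by
  have hleft : (1 - p) * (1 - q) * p = 0 := by
    rw [(commute_one_sub_one_sub hpq).eq, mul_assoc, hp.one_sub_mul_self, mul_zero]
  have hright : (1 - p) * (1 - q) * q = 0 := by rw [mul_assoc, hq.one_sub_mul_self, mul_zero]
  rw [xnor, add_mul, add_mul, hleft, hright, mul_assoc, mul_assoc, ← hpq.eq, ← mul_assoc, hp.eq,
    hq.eq]

theorem mul_add_one_sub_mul_mul {z a b c d : R} (hz : IsIdempotentElem z) (ha : Commute z a)
    (hb : Commute z b) :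
    (z * a + (1 - z) * b) * (z * c + (1 - z) * d) = z * (a * c) + (1 - z) * (b * d) := by
  have hb' : Commute (1 - z) b := commute_one_sub_left hb
  have hac : z * a * (z * c) = z * (a * c) := by
    rw [ha.eq, mul_assoc, ← mul_assoc z z, hz.eq, ← mul_assoc, ← ha.eq, mul_assoc]
  have had : z * a * ((1 - z) * d) = 0 := by
    rw [ha.eq, mul_assoc, ← mul_assoc z, hz.mul_one_sub_self, zero_mul, mul_zero]
  have hbc : (1 - z) * b * (z * c) = 0 := by
    rw [hb'.eq, mul_assoc, ← mul_assoc (1 - z), hz.one_sub_mul_self, zero_mul, mul_zero]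
  have hbd : (1 - z) * b * ((1 - z) * d) = (1 - z) * (b * d) := by
    rw [hb'.eq, mul_assoc, ← mul_assoc (1 - z) (1 - z), hz.one_sub.eq, ← mul_assoc, ← hb'.eq,
      mul_assoc]
  rw [add_mul, mul_add, mul_add, hac, had, hbc, hbd, add_zero, zero_add]

end Idempotents

section HyperbolicPair

variable {R M : Type*} [CommRing R] [AddCommGroup M] [Module R M]

/-- A hyperbolic pair for `Q`: two isotropic vectors whose polar pairing is `1`. -/
structure IsHyperbolicPair (Q : QuadraticForm R M) (u v : M) : Prop where
  left_isotropic : Q u = 0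
  right_isotropic : Q v = 0
  polar_eq_one : QuadraticMap.polar Q u v = 1

theorem commute_ι_mul_ι_ι_of_isOrtho {Q : QuadraticForm R M} {u v w : M} (hu : Q.IsOrtho u w)
    (hv : Q.IsOrtho v w) : Commute (ι Q u * ι Q v) (ι Q w) := by
  rw [Commute, SemiconjBy, mul_assoc, ι_mul_ι_comm_of_isOrtho hv, mul_neg, ← mul_assoc,
    ι_mul_ι_comm_of_isOrtho hu, neg_mul, neg_neg, mul_assoc]

namespace IsHyperbolicPair

variable {Q : QuadraticForm R M} {u v : M}

theorem ι_mul_self_left (h : IsHyperbolicPair Q u v) : ι Q u * ι Q u = 0 := by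
  rw [ι_sq_scalar, h.left_isotropic, map_zero]

theorem ι_mul_self_right (h : IsHyperbolicPair Q u v) : ι Q v * ι Q v = 0 := by
  rw [ι_sq_scalar, h.right_isotropic, map_zero]

theorem ι_mul_ι_swap (h : IsHyperbolicPair Q u v) : ι Q v * ι Q u = 1 - ι Q u * ι Q v := by
  rw [eq_sub_iff_add_eq', ι_mul_ι_add_swap, h.polar_eq_one, map_one]

theorem ι_mul_ι_mul_left (h : IsHyperbolicPair Q u v) : ι Q u * ι Q v * ι Q u = ι Q u := by
  rw [mul_assoc, h.ι_mul_ι_swap, mul_sub, mul_one, ← mul_assoc, h.ι_mul_self_left, zero_mul,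
    sub_zero]

theorem ι_mul_ι_mul_right (h : IsHyperbolicPair Q u v) : ι Q u * ι Q v * ι Q v = 0 := by
  rw [mul_assoc, h.ι_mul_self_right, mul_zero]

theorem isIdempotentElem (h : IsHyperbolicPair Q u v) : IsIdempotentElem (ι Q u * ι Q v) := by
  rw [IsIdempotentElem, ← mul_assoc, h.ι_mul_ι_mul_left]

theorem ι_mul_ι_mul_ι_smul_add_smul (h : IsHyperbolicPair Q u v) (a b : R) :
    ι Q u * ι Q v * ι Q (a • u + b • v) = ι Q (a • u + b • v) * (1 - ι Q u * ι Q v) := by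
  have hu : ι Q u * ι Q v * ι Q u = ι Q u * (1 - ι Q u * ι Q v) := by
    rw [← h.ι_mul_ι_swap, mul_assoc]
  have hv : ι Q u * ι Q v * ι Q v = ι Q v * (1 - ι Q u * ι Q v) := by
    rw [← h.ι_mul_ι_swap, mul_assoc, ← mul_assoc (ι Q v), h.ι_mul_self_right, mul_zero, zero_mul]
  simp only [map_add, map_smul, mul_add, add_mul, mul_smul_comm, smul_mul_assoc, hu, hv]

end IsHyperbolicPair

end HyperbolicPair

section FinTwo

variable {O : Type*} [CommRing O]

local notation "M₂" => Matrix (Fin 2) (Fin 2) O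

theorem adjugate_add_fin_two_s13 (x y : M₂) : (x + y).adjugate = x.adjugate + y.adjugate := by
  simp [adjugate_fin_two, add_comm]

theorem adjugate_smul_fin_two (r : O) (x : M₂) : (r • x).adjugate = r • x.adjugate := by
  rw [adjugate_smul, Fintype.card_fin, Nat.add_one_sub_one, pow_one]

theorem adjugate_adjugate_fin_two (x : M₂) : x.adjugate.adjugate = x := by
  rw [adjugate_adjugate x (by simp), Fintype.card_fin, Nat.sub_self, pow_zero, one_smul]

theorem eq_zero_of_isAlt_fin_two {N : Type*} [AddCommGroup N] [Module O N]
    {B : M₂ →ₗ[O] M₂ →ₗ[O] N} (hB : B.IsAlt) (h_one : B 1 = 0)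
    (h_diag_upper : B !![1, 0; 0, 0] !![0, 1; 0, 0] = 0)
    (h_diag_lower : B !![1, 0; 0, 0] !![0, 0; -1, 0] = 0)
    (h_upper_lower : B !![0, 1; 0, 0] !![0, 0; -1, 0] = 0) :
    B = 0 := by
  have hspan (x : M₂) : x = x 1 1 • (1 : M₂) + (x 0 0 - x 1 1) • !![1, 0; 0, 0] +
      x 0 1 • !![0, 1; 0, 0] - x 1 0 • !![0, 0; -1, 0] := by
    ext i j
    fin_cases i <;> fin_cases j <;> simp
  have h_one' (x : M₂) : B x 1 = 0 := by rw [← hB.neg, h_one, LinearMap.zero_apply, neg_zero]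
  have h_diag_upper' : B !![0, 1; 0, 0] !![1, 0; 0, 0] = 0 := by
    rw [← hB.neg, h_diag_upper, neg_zero]
  have h_diag_lower' : B !![0, 0; -1, 0] !![1, 0; 0, 0] = 0 := by
    rw [← hB.neg, h_diag_lower, neg_zero]
  have h_upper_lower' : B !![0, 0; -1, 0] !![0, 1; 0, 0] = 0 := by
    rw [← hB.neg, h_upper_lower, neg_zero]
  refine LinearMap.ext₂ fun x y => ?_
  rw [hspan x, hspan y]
  simp only [map_add, map_sub, map_smul, LinearMap.add_apply, LinearMap.sub_apply,
    LinearMap.smul_apply, hB _, h_one, h_one', h_diag_upper, h_diag_upper',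
    h_diag_lower, h_diag_lower', h_upper_lower, h_upper_lower', smul_zero, add_zero, sub_zero,
    LinearMap.zero_apply]

end FinTwo

namespace detForm

variable {O : Type*} [CommRing O]

local notation "M₂" => Matrix (Fin 2) (Fin 2) O
local notation "ιdet" => ι (detForm O)
local notation "ιdet₂" => EvenHom.bilin (even.ι (detForm O))

theorem apply_eq_det (x : M₂) : detForm O x = x.det :=
  rfl

theorem polar_eq (x y : M₂) :
    QuadraticMap.polar (detForm O) x y =
      x 0 0 * y 1 1 + x 1 1 * y 0 0 - x 0 1 * y 1 0 - x 1 0 * y 0 1 := by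
  simp only [QuadraticMap.polar, apply_eq_det, det_fin_two, Matrix.add_apply]
  ring

theorem isHyperbolicPair_diag :
    IsHyperbolicPair (detForm O) !![1, 0; 0, 0] !![0, 0; 0, 1] where
  left_isotropic := by simp [apply_eq_det]
  right_isotropic := by simp [apply_eq_det]
  polar_eq_one := by simp [polar_eq]

theorem isHyperbolicPair_antidiag :
    IsHyperbolicPair (detForm O) !![0, 1; 0, 0] !![0, 0; -1, 0] where
  left_isotropic := by simp [apply_eq_det]
  right_isotropic := by simp [apply_eq_det]
  polar_eq_one := by simp [polar_eq]

theorem isOrtho_diag_antidiag (a b c d : O) :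
    (detForm O).IsOrtho !![a, 0; 0, d] !![0, b; c, 0] := by
  simp [QuadraticMap.isOrtho_def, apply_eq_det, sub_eq_add_neg]

theorem ι_one_mul_ι_mul_ι_one (x : M₂) :
    ιdet 1 * ιdet x * ιdet 1 = ιdet x.adjugate := by
  rw [ι_mul_ι_mul_ι]
  congr 1
  ext i j
  fin_cases i <;> fin_cases j <;> simp [polar_eq, apply_eq_det, adjugate_fin_two]

theorem ι_one_mul_ι_adjugate_mul_ι_one (x : M₂) :
    ιdet 1 * ιdet x.adjugate * ιdet 1 = ιdet x := by
  rw [ι_one_mul_ι_mul_ι_one, adjugate_adjugate_fin_two]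

theorem ι_one_mul_ι_one : ιdet 1 * ιdet 1 = 1 := by
  rw [ι_sq_scalar, apply_eq_det, det_one, map_one]

variable (O) in
/-- The idempotent of the even Clifford algebra attached to the hyperbolic pair of diagonal matrix
units. -/
noncomputable def diagIdem : even (detForm O) :=
  ιdet₂ !![1, 0; 0, 0] !![0, 0; 0, 1]

variable (O) in
/-- The idempotent of the even Clifford algebra attached to the hyperbolic pair of antidiagonal
matrix units; the sign makes the polar pairing equal to `1`. -/
noncomputable def antidiagIdem : even (detForm O) :=
  ιdet₂ !![0, 1; 0, 0] !![0, 0; -1, 0]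

variable (O) in
/-- The central idempotent of the even Clifford algebra corresponding to `(1, 0)`. -/
noncomputable def centralIdem : even (detForm O) :=
  xnor (diagIdem O) (antidiagIdem O)

theorem isIdempotentElem_diagIdem : IsIdempotentElem (diagIdem O) :=
  Subtype.ext isHyperbolicPair_diag.isIdempotentElem.eq

theorem isIdempotentElem_antidiagIdem : IsIdempotentElem (antidiagIdem O) :=
  Subtype.ext isHyperbolicPair_antidiag.isIdempotentElem.eq

theorem commute_diagIdem_ι_antidiag (b c : O) :
    Commute (diagIdem O : CliffordAlgebra (detForm O)) (ιdet !![0, b; c, 0]) :=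
  commute_ι_mul_ι_ι_of_isOrtho (isOrtho_diag_antidiag 1 b c 0) (isOrtho_diag_antidiag 0 b c 1)

theorem commute_antidiagIdem_ι_diag (a d : O) :
    Commute (antidiagIdem O : CliffordAlgebra (detForm O)) (ιdet !![a, 0; 0, d]) :=
  commute_ι_mul_ι_ι_of_isOrtho (isOrtho_diag_antidiag a 1 0 d).symm
    (isOrtho_diag_antidiag a 0 (-1) d).symm

theorem commute_diagIdem_antidiagIdem : Commute (diagIdem O) (antidiagIdem O) :=
  Subtype.ext
    ((commute_diagIdem_ι_antidiag 1 0).mul_right (commute_diagIdem_ι_antidiag 0 (-1))).eq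

theorem isIdempotentElem_centralIdem : IsIdempotentElem (centralIdem O) :=
  isIdempotentElem_xnor isIdempotentElem_diagIdem isIdempotentElem_antidiagIdem
    commute_diagIdem_antidiagIdem

theorem centralIdem_mul_diagIdem :
    centralIdem O * diagIdem O = centralIdem O * antidiagIdem O :=
  xnor_mul_left_eq_xnor_mul_right isIdempotentElem_diagIdem isIdempotentElem_antidiagIdem
    commute_diagIdem_antidiagIdem

theorem diagIdem_mul_ι_diag (a d : O) :
    (diagIdem O : CliffordAlgebra (detForm O)) * ιdet !![a, 0; 0, d] =
      ιdet !![a, 0; 0, d] * (1 - diagIdem O) := by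
  simpa using! isHyperbolicPair_diag.ι_mul_ι_mul_ι_smul_add_smul a d

theorem antidiagIdem_mul_ι_antidiag (b c : O) :
    (antidiagIdem O : CliffordAlgebra (detForm O)) * ιdet !![0, b; c, 0] =
      ιdet !![0, b; c, 0] * (1 - antidiagIdem O) := by
  simpa using! isHyperbolicPair_antidiag.ι_mul_ι_mul_ι_smul_add_smul b (-c)

theorem centralIdem_mul_ι (x : M₂) :
    (centralIdem O : CliffordAlgebra (detForm O)) * ιdet x = ιdet x * (1 - centralIdem O) := by
  have hdiag : (centralIdem O : CliffordAlgebra (detForm O)) * ιdet !![x 0 0, 0; 0, x 1 1] =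
      ιdet !![x 0 0, 0; 0, x 1 1] * (1 - centralIdem O) :=
    xnor_mul_of_swap_left (diagIdem_mul_ι_diag _ _) (commute_antidiagIdem_ι_diag _ _)
  have hantidiag : (centralIdem O : CliffordAlgebra (detForm O)) * ιdet !![0, x 0 1; x 1 0, 0] =
      ιdet !![0, x 0 1; x 1 0, 0] * (1 - centralIdem O) :=
    xnor_mul_of_swap_right (congrArg Subtype.val commute_diagIdem_antidiagIdem.eq)
      (commute_diagIdem_ι_antidiag _ _) (antidiagIdem_mul_ι_antidiag _ _)
  have hx : x = !![x 0 0, 0; 0, x 1 1] + !![0, x 0 1; x 1 0, 0] := by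
    simpa using eta_fin_two x
  rw [hx, map_add, mul_add, add_mul, hdiag, hantidiag]

theorem one_sub_centralIdem_mul_ι (x : M₂) :
    (1 - centralIdem O : CliffordAlgebra (detForm O)) * ιdet x = ιdet x * centralIdem O := by
  rw [sub_mul, centralIdem_mul_ι, one_mul, mul_sub, mul_one, sub_sub_cancel]

variable (O) in
/-- The failure of `x ↦ ι x * ι 1` to be multiplicative, with a factor `ι 1` removed on the
right. -/
noncomputable def mulDefect : M₂ →ₗ[O] M₂ →ₗ[O] CliffordAlgebra (detForm O) :=
  (LinearMap.mul O (CliffordAlgebra (detForm O))).compl₁₂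
      (LinearMap.mulRight O (ιdet 1) ∘ₗ ιdet) ιdet -
    (LinearMap.mul O M₂).compr₂ ιdet

theorem mulDefect_apply (x y : M₂) :
    mulDefect O x y = ιdet x * ιdet 1 * ιdet y - ιdet (x * y) :=
  rfl

theorem isAlt_mulDefect : (mulDefect O).IsAlt := by
  intro x
  rw [mulDefect_apply, ι_mul_ι_mul_ι, sub_eq_zero]
  congr 1
  ext i j
  fin_cases i <;> fin_cases j <;>
    simp [polar_eq, apply_eq_det, det_fin_two, Matrix.mul_apply, Fin.sum_univ_two] <;> ring

theorem mulDefect_one_left : mulDefect O 1 = 0 := by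
  ext1 y
  rw [mulDefect_apply, ι_one_mul_ι_one, one_mul, one_mul, sub_self, LinearMap.zero_apply]

theorem ι_one : ιdet 1 = ιdet !![1, 0; 0, 0] + ιdet !![0, 0; 0, 1] := by
  rw [← map_add, one_fin_two]
  simp

theorem ι_mul_ι_one_eq_diagIdem : ιdet !![1, 0; 0, 0] * ιdet 1 = diagIdem O := by
  rw [ι_one, mul_add, isHyperbolicPair_diag.ι_mul_self_left, zero_add]
  rfl

theorem diagIdem_mul_ι_one : (diagIdem O : CliffordAlgebra (detForm O)) * ιdet 1 =
    ιdet !![1, 0; 0, 0] := by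
  rw [← ι_mul_ι_one_eq_diagIdem, mul_assoc, ι_one_mul_ι_one, mul_one]

theorem ι_mul_ι_one_mul_ι_eq_neg_antidiagIdem_mul :
    ιdet !![0, 1; 0, 0] * ιdet 1 * ιdet !![0, 0; -1, 0] = -(antidiagIdem O * ιdet 1) := by
  have h : (detForm O).IsOrtho 1 !![0, 0; -1, 0] := by
    simpa only [one_fin_two] using isOrtho_diag_antidiag 1 0 (-1) 1
  rw [mul_assoc, ι_mul_ι_comm_of_isOrtho h, mul_neg, ← mul_assoc]
  rfl

theorem centralIdem_mul_diagIdem_mul (a : CliffordAlgebra (detForm O)) :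
    (centralIdem O : CliffordAlgebra (detForm O)) * (diagIdem O * a) =
      centralIdem O * (antidiagIdem O * a) := by
  rw [← mul_assoc, ← mul_assoc]
  exact congrArg (· * a) (congrArg Subtype.val centralIdem_mul_diagIdem)

theorem antidiagIdem_mul_ι_left :
    (antidiagIdem O : CliffordAlgebra (detForm O)) * ιdet !![0, 1; 0, 0] = ιdet !![0, 1; 0, 0] :=
  isHyperbolicPair_antidiag.ι_mul_ι_mul_left

theorem antidiagIdem_mul_ι_right :
    (antidiagIdem O : CliffordAlgebra (detForm O)) * ιdet !![0, 0; -1, 0] = 0 :=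
  isHyperbolicPair_antidiag.ι_mul_ι_mul_right

theorem centralIdem_mul_mulDefect (x y : M₂) :
    (centralIdem O : CliffordAlgebra (detForm O)) * mulDefect O x y = 0 := by
  suffices h : (mulDefect O).compr₂
      (LinearMap.mulLeft O (centralIdem O : CliffordAlgebra (detForm O))) = 0 from
    LinearMap.congr_fun₂ h x y
  have hprod_diag_upper : (!![1, 0; 0, 0] * !![0, 1; 0, 0] : M₂) = !![0, 1; 0, 0] := by
    ext i j; fin_cases i <;> fin_cases j <;> simp
  have hprod_diag_lower : (!![1, 0; 0, 0] * !![0, 0; -1, 0] : M₂) = 0 := by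
    ext i j; fin_cases i <;> fin_cases j <;> simp
  have hprod_upper_lower : (!![0, 1; 0, 0] * !![0, 0; -1, 0] : M₂) = -!![1, 0; 0, 0] := by
    ext i j; fin_cases i <;> fin_cases j <;> simp
  refine eq_zero_of_isAlt_fin_two ?_ ?_ ?_ ?_ ?_
  · intro x
    simp [isAlt_mulDefect x]
  · ext1 y
    simp [mulDefect_one_left]
  · rw [LinearMap.compr₂_apply, LinearMap.mulLeft_apply, mulDefect_apply, hprod_diag_upper,
      ι_mul_ι_one_eq_diagIdem, mul_sub, centralIdem_mul_diagIdem_mul, antidiagIdem_mul_ι_left,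
      sub_self]
  · rw [LinearMap.compr₂_apply, LinearMap.mulLeft_apply, mulDefect_apply, hprod_diag_lower,
      ι_mul_ι_one_eq_diagIdem, map_zero, sub_zero, centralIdem_mul_diagIdem_mul,
      antidiagIdem_mul_ι_right, mul_zero]
  · rw [LinearMap.compr₂_apply, LinearMap.mulLeft_apply, mulDefect_apply, hprod_upper_lower,
      ι_mul_ι_one_mul_ι_eq_neg_antidiagIdem_mul, map_neg, sub_neg_eq_add, mul_add, mul_neg,
      ← centralIdem_mul_diagIdem_mul, diagIdem_mul_ι_one, neg_add_cancel]

theorem centralIdem_mul_ι_mul (x y : M₂) :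
    (centralIdem O : CliffordAlgebra (detForm O)) * ιdet (x * y) =
      centralIdem O * (ιdet x * ιdet 1 * ιdet y) := by
  rw [eq_comm, ← sub_eq_zero, ← mul_sub, ← mulDefect_apply, centralIdem_mul_mulDefect]

theorem commute_centralIdem_ι₂ (x y : M₂) : Commute (centralIdem O) (ιdet₂ x y) := by
  refine Subtype.ext ?_
  change (centralIdem O : CliffordAlgebra (detForm O)) * (ιdet x * ιdet y) =
    ιdet x * ιdet y * centralIdem O
  rw [← mul_assoc, centralIdem_mul_ι, mul_assoc, one_sub_centralIdem_mul_ι, mul_assoc]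

theorem centralIdem_mul_ι₂ (x y : M₂) :
    centralIdem O * ιdet₂ x y = centralIdem O * ιdet₂ (x * y.adjugate) 1 := by
  refine Subtype.ext ?_
  change (centralIdem O : CliffordAlgebra (detForm O)) * (ιdet x * ιdet y) =
    centralIdem O * (ιdet (x * y.adjugate) * ιdet 1)
  calc (centralIdem O : CliffordAlgebra (detForm O)) * (ιdet x * ιdet y)
      = centralIdem O * (ιdet x * (ιdet 1 * ιdet y.adjugate * ιdet 1)) := by
        rw [ι_one_mul_ι_adjugate_mul_ι_one]
    _ = centralIdem O * (ιdet x * ιdet 1 * ιdet y.adjugate) * ιdet 1 := by simp only [mul_assoc]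
    _ = centralIdem O * (ιdet (x * y.adjugate) * ιdet 1) := by
        rw [← centralIdem_mul_ι_mul, mul_assoc]

theorem one_sub_centralIdem_mul_ι₂ (x y : M₂) :
    (1 - centralIdem O) * ιdet₂ x y = (1 - centralIdem O) * ιdet₂ 1 (x.adjugate * y) := by
  refine Subtype.ext ?_
  change (1 - centralIdem O : CliffordAlgebra (detForm O)) * (ιdet x * ιdet y) =
    (1 - centralIdem O) * (ιdet 1 * ιdet (x.adjugate * y))
  symm
  calc (1 - centralIdem O : CliffordAlgebra (detForm O)) * (ιdet 1 * ιdet (x.adjugate * y))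
      = ιdet 1 * (centralIdem O * ιdet (x.adjugate * y)) := by
        rw [← mul_assoc, one_sub_centralIdem_mul_ι, mul_assoc]
    _ = ιdet 1 * centralIdem O * (ιdet x.adjugate * ιdet 1 * ιdet y) := by
        rw [centralIdem_mul_ι_mul, ← mul_assoc]
    _ = (1 - centralIdem O) * (ιdet 1 * ιdet x.adjugate * ιdet 1 * ιdet y) := by
        rw [← one_sub_centralIdem_mul_ι]
        simp only [mul_assoc]
    _ = (1 - centralIdem O) * (ιdet x * ιdet y) := by rw [ι_one_mul_ι_adjugate_mul_ι_one]

theorem ι₂_one_right_mul_ι₂_one_right (x y : M₂) : ιdet₂ x 1 * ιdet₂ y 1 = ιdet₂ x y.adjugate := by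
  refine Subtype.ext ?_
  change ιdet x * ιdet 1 * (ιdet y * ιdet 1) = ιdet x * ιdet y.adjugate
  rw [mul_assoc, ← mul_assoc (ιdet 1), ι_one_mul_ι_mul_ι_one]

theorem ι₂_one_left_mul_ι₂_one_left (x y : M₂) :
    ιdet₂ 1 x * ιdet₂ 1 y = ιdet₂ x.adjugate y := by
  refine Subtype.ext ?_
  change ιdet 1 * ιdet x * (ιdet 1 * ιdet y) = ιdet x.adjugate * ιdet y
  rw [← mul_assoc, ι_one_mul_ι_mul_ι_one]

variable (O) in
/-- The pairing `(x, y) ↦ (x * ȳ, x̄ * y)`, where the bar is the adjugate, in the form required by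
the universal property of the even Clifford algebra. -/
noncomputable def adjugatePairing : EvenHom (detForm O) (M₂ × M₂) where
  bilin := LinearMap.mk₂ O (fun x y => (x * y.adjugate, x.adjugate * y))
    (fun x x' y => by simp only [adjugate_add_fin_two_s13, add_mul, Prod.mk_add_mk])
    (fun r x y => by simp only [adjugate_smul_fin_two, smul_mul_assoc, Prod.smul_mk])
    (fun x y y' => by simp only [adjugate_add_fin_two_s13, mul_add, Prod.mk_add_mk])
    (fun r x y => by simp only [adjugate_smul_fin_two, mul_smul_comm, Prod.smul_mk])
  contract x := by
    rw [LinearMap.mk₂_apply, mul_adjugate, adjugate_mul, apply_eq_det,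
      Algebra.algebraMap_eq_smul_one]
    rfl
  contract_mid x y w := by
    have h₁ : x * y.adjugate * (y * w.adjugate) = y.det • (x * w.adjugate) := by
      rw [mul_assoc, ← mul_assoc _ y, adjugate_mul, smul_mul_assoc, one_mul, mul_smul_comm]
    have h₂ : x.adjugate * y * (y.adjugate * w) = y.det • (x.adjugate * w) := by
      rw [mul_assoc, ← mul_assoc y, mul_adjugate, smul_mul_assoc, one_mul, mul_smul_comm]
    simp only [LinearMap.mk₂_apply, Prod.mk_mul_mk, h₁, h₂, apply_eq_det, Prod.smul_mk]

variable (O) in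
/-- The homomorphism from the even Clifford algebra sending `ι x * ι y` to `(x * ȳ, x̄ * y)`, where
the bar is the adjugate. -/
noncomputable def toProd : even (detForm O) →ₐ[O] M₂ × M₂ :=
  even.lift (detForm O) (adjugatePairing O)

theorem toProd_ι₂ (x y : M₂) : toProd O (ιdet₂ x y) = (x * y.adjugate, x.adjugate * y) :=
  even.lift_ι (detForm O) (adjugatePairing O) x y

theorem toProd_centralIdem : toProd O (centralIdem O) = (1, 0) := by
  simp only [centralIdem, xnor, diagIdem, antidiagIdem, map_add, map_mul, map_sub, map_one,
    toProd_ι₂, adjugate_fin_two_of, Prod.one_eq_mk, Prod.mk_mul_mk, Prod.mk_add_mk, Prod.mk_sub_mk]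
  ext i j <;> fin_cases i <;> fin_cases j <;> simp [Matrix.mul_apply, Fin.sum_univ_two]

variable (O) in
/-- The linear map inverse to `toProd`: it sends `(x, 0)` to `z * (ι x * ι 1)` and `(0, y)` to
`(1 - z) * (ι 1 * ι y)`, where `z` is `centralIdem`. -/
noncomputable def ofProdLinear : M₂ × M₂ →ₗ[O] even (detForm O) :=
  (LinearMap.mulLeft O (centralIdem O) ∘ₗ LinearMap.flip ιdet₂ 1).coprod
    (LinearMap.mulLeft O (1 - centralIdem O) ∘ₗ ιdet₂ 1)

theorem ofProdLinear_apply (m : M₂ × M₂) : ofProdLinear O m =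
    centralIdem O * ιdet₂ m.1 1 + (1 - centralIdem O) * ιdet₂ 1 m.2 :=
  rfl

theorem ofProdLinear_one : ofProdLinear O 1 = 1 := by
  have h : ιdet₂ 1 1 = 1 := by rw [(even.ι (detForm O)).contract, apply_eq_det, det_one, map_one]
  rw [ofProdLinear_apply, Prod.fst_one, Prod.snd_one, h, mul_one, mul_one, add_sub_cancel]

theorem ofProdLinear_adjugate (x y : M₂) :
    ofProdLinear O (x * y.adjugate, x.adjugate * y) = ιdet₂ x y := by
  rw [ofProdLinear_apply, ← centralIdem_mul_ι₂, ← one_sub_centralIdem_mul_ι₂, ← add_mul,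
    add_sub_cancel, one_mul]

theorem toProd_ofProdLinear (m : M₂ × M₂) : toProd O (ofProdLinear O m) = m := by
  rw [ofProdLinear_apply]
  simp [toProd_ι₂, toProd_centralIdem, Prod.one_eq_mk]

theorem ofProdLinear_mul (m n : M₂ × M₂) :
    ofProdLinear O (m * n) = ofProdLinear O m * ofProdLinear O n := by
  have hfst : centralIdem O * ιdet₂ (m.1 * n.1) 1 =
      centralIdem O * (ιdet₂ m.1 1 * ιdet₂ n.1 1) := by
    rw [ι₂_one_right_mul_ι₂_one_right, centralIdem_mul_ι₂ m.1, adjugate_adjugate_fin_two]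
  have hsnd : (1 - centralIdem O) * ιdet₂ 1 (m.2 * n.2) =
      (1 - centralIdem O) * (ιdet₂ 1 m.2 * ιdet₂ 1 n.2) := by
    rw [ι₂_one_left_mul_ι₂_one_left, one_sub_centralIdem_mul_ι₂ _ n.2, adjugate_adjugate_fin_two]
  rw [ofProdLinear_apply, Prod.fst_mul, Prod.snd_mul, hfst, hsnd, ofProdLinear_apply,
    ofProdLinear_apply, mul_add_one_sub_mul_mul isIdempotentElem_centralIdem
      (commute_centralIdem_ι₂ _ _) (commute_centralIdem_ι₂ _ _)]

variable (O) in
/-- `ofProdLinear` as a homomorphism of algebras. -/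
noncomputable def ofProd : M₂ × M₂ →ₐ[O] even (detForm O) :=
  AlgHom.ofLinearMap (ofProdLinear O) ofProdLinear_one ofProdLinear_mul

theorem ofProd_comp_toProd : (ofProd O).comp (toProd O) = AlgHom.id O (even (detForm O)) := by
  refine even.algHom_ext _ (EvenHom.ext (LinearMap.ext₂ fun x y => ?_))
  change ofProdLinear O (toProd O (ιdet₂ x y)) = ιdet₂ x y
  rw [toProd_ι₂, ofProdLinear_adjugate]

variable (O) in
/-- The even Clifford algebra of the determinant form is a product of two matrix algebras. -/
noncomputable def evenEquivProd : even (detForm O) ≃ₐ[O] M₂ × M₂ :=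
  AlgEquiv.ofAlgHom (toProd O) (ofProd O) (AlgHom.ext toProd_ofProdLinear) ofProd_comp_toProd

end detForm

theorem statement13_general (O : Type*) [CommRing O] :
    Nonempty ((CliffordAlgebra.even (detForm O)) ≃ₐ[O]
      (Matrix (Fin 2) (Fin 2) O × Matrix (Fin 2) (Fin 2) O)) :=
  ⟨detForm.evenEquivProd O⟩

/-- The even Clifford algebra of the determinant quadratic form on the
4-dimensional `ℚ`-vector space `M₂(ℚ)` is isomorphic, as a `ℚ`-algebra, to
`M₂(ℚ) × M₂(ℚ)`. -/
theorem statement13 :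
    Nonempty ((CliffordAlgebra.even (detForm ℚ)) ≃ₐ[ℚ]
      (Matrix (Fin 2) (Fin 2) ℚ × Matrix (Fin 2) (Fin 2) ℚ)) := by
  exact statement13_general ℚ
end

section
/- Let p be an odd prime and k ≥ 1 an integer. In the polynomial ring 𝔽_p[t₁, t₂], the element (t₁ − t₂)^{p^k} · ∏_{a=1}^{k} ((t₁ − t₂^{p^{2a}})·(t₂ − t₁^{p^{2a}}))^{p^{k−a}} − (t₁·t₂)^{(p^k − 1)/(p − 1)} · (t₁^{p^k} − t₂^{p^k}) lies in the ideal (t₁, t₂)^{p^{k+1}}; that is, the product is congruent to (t₁t₂)^{(p^k−1)/(p−1)}·(t₁^{p^k} − t₂^{p^k}) modulo terms of total degree ≥ p^{k+1}. -/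
open MvPolynomial

/-!
Raising to a power of `p` is additive in characteristic `p`, so
`(x - y ^ p ^ (2 * a)) ^ p ^ (k - a) = x ^ p ^ (k - a) - y ^ p ^ (k + a)`. As `a ≥ 1`, the last term
lies in the `p ^ (k + 1)`-th power of any ideal containing `y`; what remains of the product over
`a` is a power of `x * y` whose exponent is a geometric sum.
-/

theorem sum_Icc_one_apply_sub {M : Type*} [AddCommMonoid M] (f : ℕ → M) (n : ℕ) :
    ∑ a ∈ Finset.Icc 1 n, f (n - a) = ∑ i ∈ Finset.range n, f i := by
  rw [← Finset.Ico_add_one_right_eq_Icc, Finset.sum_Ico_eq_sum_range,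
    ← Finset.sum_range_reflect f]
  simp only [Nat.add_sub_cancel, Nat.sub_sub]

section ExpChar

variable {R : Type*} [CommRing R] {p : ℕ} {I : Ideal R} {x y : R}

theorem sub_pow_expChar_pow_smodEq [ExpChar R p] (hy : y ∈ I) (x : R) (m n : ℕ) :
    (x - y ^ p ^ m) ^ p ^ n ≡ x ^ p ^ n [SMOD I ^ p ^ (m + n)] := by
  have hy_pow : y ^ p ^ (m + n) ∈ I ^ p ^ (m + n) := Ideal.pow_mem_pow hy _
  rw [sub_pow_expChar_pow, ← pow_mul, ← pow_add, SModEq.sub_mem]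
  simpa only [sub_sub_cancel_left, neg_mem_iff] using hy_pow

theorem prod_sub_mul_sub_pow_smodEq [ExpChar R p] (hx : x ∈ I) (hy : y ∈ I) (k : ℕ) :
    ∏ a ∈ Finset.Icc 1 k, ((x - y ^ p ^ (2 * a)) * (y - x ^ p ^ (2 * a))) ^ p ^ (k - a) ≡
      (x * y) ^ ∑ i ∈ Finset.range k, p ^ i [SMOD I ^ p ^ (k + 1)] := by
  rw [← sum_Icc_one_apply_sub (p ^ ·), ← Finset.prod_pow_eq_pow_sum]
  refine SModEq.prod fun a ha ↦ ?_
  have one_le_a : 1 ≤ a := (Finset.mem_Icc.mp ha).1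
  have hle : I ^ p ^ (2 * a + (k - a)) ≤ I ^ p ^ (k + 1) :=
    Ideal.pow_le_pow_right (Nat.pow_le_pow_right (expChar_pos R p) (by lia))
  rw [mul_pow, mul_pow]
  exact ((sub_pow_expChar_pow_smodEq hy x _ _).mono hle).mul
    ((sub_pow_expChar_pow_smodEq hx y _ _).mono hle)

theorem statement14_general (hp : p.Prime) [CharP R p] (hx : x ∈ I) (hy : y ∈ I) (k : ℕ) :
    (x - y) ^ p ^ k *
        ∏ a ∈ Finset.Icc 1 k, ((x - y ^ p ^ (2 * a)) * (y - x ^ p ^ (2 * a))) ^ p ^ (k - a) -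
      (x * y) ^ ((p ^ k - 1) / (p - 1)) * (x ^ p ^ k - y ^ p ^ k) ∈ I ^ p ^ (k + 1) := by
  have : ExpChar R p := .prime hp
  rw [← Nat.geomSum_eq hp.two_le, ← sub_pow_expChar_pow, mul_comm, ← SModEq.sub_mem]
  exact (prod_sub_mul_sub_pow_smodEq hx hy k).mul .rfl

end ExpChar

/-- Let `p` be an odd prime and `k ≥ 1`. In `𝔽_p[t₁, t₂]`,
`(t₁ − t₂)^{p^k} · ∏_{a=1}^{k} ((t₁ − t₂^{p^{2a}})(t₂ − t₁^{p^{2a}}))^{p^{k−a}}`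
is congruent to `(t₁t₂)^{(p^k−1)/(p−1)} · (t₁^{p^k} − t₂^{p^k})` modulo the ideal
`(t₁, t₂)^{p^{k+1}}`. -/
theorem statement14 (p : ℕ) (hp : p.Prime) (hodd : Odd p) (k : ℕ) (hk : 1 ≤ k) :
    ((X 0 : MvPolynomial (Fin 2) (ZMod p)) - X 1) ^ p ^ k *
        ∏ a ∈ Finset.Icc 1 k,
          ((X 0 - X 1 ^ p ^ (2 * a)) * (X 1 - X 0 ^ p ^ (2 * a))) ^ p ^ (k - a) -
      (X 0 * X 1) ^ ((p ^ k - 1) / (p - 1)) * (X 0 ^ p ^ k - X 1 ^ p ^ k) ∈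
      (Ideal.span {(X 0 : MvPolynomial (Fin 2) (ZMod p)), X 1}) ^ p ^ (k + 1) := by
  exact statement14_general hp (Ideal.subset_span (by simp)) (Ideal.subset_span (by simp)) k
end

section
/- Let p be an odd prime, O = ℤ_p, and q = p. Let ε₁, ε₂ ∈ ℤ_p^× and let M be the integral quadratic lattice ℤ_p² with quadratic form Q(x, y) = ε₁·p·x² + ε₂·p²·y². Let N = p^{2k}·N₀ with N₀ ∈ ℤ_p of valuation ν_p(N₀) ∈ {0, 1} and k ≥ 1, and assume the quadratic space (M ⊥ ⟨N⟩) ⊗ ℚ_p is not isometric to a subspace of (M₂(ℚ_p), det). Suppose P is a polynomial with real coefficients such that for every m ≥ 0, the sequence d ↦ #Rep_{δ(N) ⊥ H^+_{2m}, M}(ℤ_p/p^d) / p^{d(4m+3)} converges as d → ∞ to P(p^{−m})·(1 − p^{−1−m}). Then P(X) = 1 + pX + (p − 1)X² − pX³ − pX⁴; in particular the derived local density −P′(1) equals 4p + 2. -/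
/-! Shared setup: quadratic lattices over a complete discrete valuation ring `O` with finite
residue field of cardinality `q` and uniformizer `π`.

A quadratic lattice of rank `n` over `O` is the finite free `O`-module `Fin n → O` equipped
with an (`O`-valued, hence integral) quadratic form `Q`; the associated bilinear form is
`(x, y) = Q (x + y) - Q x - Q y` (`QuadraticMap.polar`).  The lattice is *self-dual* when
the associated bilinear form is a perfect pairing, i.e. when `QuadraticMap.polarBilin Q`
is bijective as a map to the dual module.

For `d ≥ 1`, `Rep_{H,L}(O/π^d)` — the set of `O/π^d`-linear maps `L/π^d L → H/π^d H`
intertwining the reductions of the quadratic forms — is encoded by the tuples of images of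
the standard basis vectors of `L`; such a tuple comes from a quadratic-module homomorphism
exactly when it reproduces the Gram data of the basis modulo `π^d`. -/

open Function Filter

namespace ASW

noncomputable section

variable {O : Type*} [CommRing O]

/-- The quotient `W ⧸ c·W`. -/
abbrev modQuot (c : O) (W : Type*) [AddCommGroup W] [Module O W] :=
  W ⧸ ((Ideal.span {c} : Ideal O) • (⊤ : Submodule O W))

/-- Gram data of a quadratic form on the free module `Fin r → O` with respect to the
standard basis `e_j = Pi.single j 1`: values of the form on the diagonal, the associated
bilinear form `(x, y) = Q (x + y) - Q x - Q y` off the diagonal. -/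
def gramOf {r : ℕ} (QM : QuadraticForm O (Fin r → O)) : Fin r → Fin r → O :=
  fun j l =>
    if j = l then QM (Pi.single j 1)
    else QuadraticMap.polar (⇑QM) (Pi.single j 1) (Pi.single l 1)

/-- Gram data of the orthogonal direct sum `M ⊥ ⟨N⟩`, where `M` has Gram data `g` and
`⟨N⟩` is the rank-one lattice with generator of norm `N`. -/
def gramOrth {r : ℕ} (g : Fin r → Fin r → O) (N : O) : Fin (r + 1) → Fin (r + 1) → O :=
  fun j l =>
    if hj : (j : ℕ) < r then (if hl : (l : ℕ) < r then g ⟨j, hj⟩ ⟨l, hl⟩ else 0)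
    else if (l : ℕ) < r then 0 else N

/-- The set `Rep_{W,L}(O/π^d)` of quadratic-module homomorphisms `L/π^d L → W/π^d W`,
where `L` is the free quadratic lattice of rank `r` with Gram data `g`: a homomorphism is
identified with the tuple of images of the basis vectors of `L`, which can be any tuple in
`(W/π^d W)^r` reproducing the Gram data `g` modulo `π^d`. -/
def repSet (π : O) (d : ℕ) {W : Type*} [AddCommGroup W] [Module O W]
    (QW : QuadraticForm O W) {r : ℕ} (g : Fin r → Fin r → O) :
    Set (Fin r → modQuot (π ^ d) W) :=
  (fun x : Fin r → W => fun j => (Submodule.Quotient.mk (x j) : modQuot (π ^ d) W)) ''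
    {x | (∀ j, π ^ d ∣ QW (x j) - g j j) ∧
      ∀ j l, j ≠ l → π ^ d ∣ QuadraticMap.polar (⇑QW) (x j) (x l) - g j l}

/-- `#Rep_{W,L}(O/π^d)`. -/
def repCount (π : O) (d : ℕ) {W : Type*} [AddCommGroup W] [Module O W]
    (QW : QuadraticForm O W) {r : ℕ} (g : Fin r → Fin r → O) : ℕ :=
  Nat.card (repSet π d QW g)

/-- The orthogonal complement `{y | (y, w) = 0}` of a vector `w`, where
`(y, w) = Q (y + w) - Q y - Q w` is the associated bilinear form. -/
def perp {W : Type*} [AddCommGroup W] [Module O W] (QW : QuadraticForm O W) (w : W) :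
    Submodule O W :=
  LinearMap.ker ((QuadraticMap.polarBilin QW).flip w)

/-- The restriction of a quadratic form to a submodule. -/
def restrict {W : Type*} [AddCommGroup W] [Module O W] (QW : QuadraticForm O W)
    (U : Submodule O W) : QuadraticForm O U :=
  QW.comp U.subtype

/-- The hyperbolic lattice `H⁺_{2m}`: the orthogonal direct sum of `m` copies of
`(O², (x, y) ↦ x·y)`. -/
def hyp (O : Type*) [CommRing O] (m : ℕ) : QuadraticForm O (Fin (2 * m) → O) :=
  Matrix.toQuadraticMap'
    (Matrix.of fun i j : Fin (2 * m) => if (i : ℕ) % 2 = 0 ∧ (j : ℕ) = (i : ℕ) + 1 then 1 else 0)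

/-- The lattice `δ(c) = O³` with quadratic form `(a, b, c') ↦ -c·a² - b·c'`
(the matrices `[[-ca, b], [c', a]]` with the determinant form). -/
def delta (O : Type*) [CommRing O] (c : O) : QuadraticForm O (Fin 3 → O) :=
  Matrix.toQuadraticMap' !![-c, 0, 0; 0, 0, -1; 0, 0, 0]

/-- `D(k', r') = k'·r' - r'·(r'+1)/2`, the dimension of the generic fiber of the scheme of
representations of a rank-`r'` lattice by a rank-`k'` lattice. -/
def Dexp (k' r' : ℕ) : ℕ := k' * r' - r' * (r' + 1) / 2

/-- `∏_{j=1}^{s} (1 - q^{-2j-2m})`. -/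
def norTail (q : ℝ) (s m : ℕ) : ℝ := ∏ j ∈ Finset.range s, (1 - q⁻¹ ^ (2 * (j + 1) + 2 * m))

/-- The normalizing factor for `δ(N) ⊥ H⁺_{2m+r-2}` against a rank-`r` lattice (`r` even):
`(1 - q^{-r/2-m})·∏_{j=1}^{(r-2)/2}(1 - q^{-2j-2m})` when `ν(N) ≥ 1`, and
`∏_{j=1}^{r/2}(1 - q^{-2j-2m})` when `ν(N) = 0`. -/
def norOdd (q : ℝ) (r n m : ℕ) : ℝ :=
  if 1 ≤ n then (1 - q⁻¹ ^ (r / 2 + m)) * norTail q ((r - 2) / 2) m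
  else norTail q (r / 2) m

/-- The normalizing factor `(1 - q^{-(r+2)/2-m})·∏_{j=1}^{r/2}(1 - q^{-2j-2m})` for
`H⁺_{2m+r+2}` against a rank-`(r+1)` lattice. -/
def norEven (q : ℝ) (r m : ℕ) : ℝ := (1 - q⁻¹ ^ ((r + 2) / 2 + m)) * norTail q (r / 2) m

end

end ASW

/-!
Write `R = ℤ/p^d`, `N = p² n` and `X = p⁻ᵐ`. Absorbing the hyperbolic plane of `δ(N)` into
`H⁺_{2m}`, one counts pairs of vectors `(a, u)`, `(b, v)` in `R × H⁺_{2(m+1)}` with Gram matrix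
`diag(ε₁ p, ε₂ p²)` for the form `-N a² + Q(u)`.

* Since `p` is odd, Hensel's lemma shows that `ε₂ + n b²` can fail to be a unit only if
  `-ε₂ n` is the square of a unit; then `⟨ε₂ p²⟩ ⊥ ⟨N⟩` is a hyperbolic plane and `M ⊥ ⟨N⟩` embeds
  into the matrices with the determinant form. So `ε₂ + n b²` is always a unit.
* Sorting the solutions of `f ⬝ᵥ g = c` in `H⁺_{2n}` by the largest power of `p` dividing `f`
  gives the number of vectors of norm `c`, which depends only on the valuation of `c`.
* The norm of `u` is `p` times a unit, so `u` has a unit coordinate. Splitting off the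
  corresponding hyperbolic plane, the vectors `v` with `Q(v) = β` and `(u, v) = γ` are parametrised
  by `t ∈ R` and a vector of norm `β - γ t + Q(u) t²` in `H⁺_{2m}`; this norm has valuation `1` if
  `t` is a unit and `2` otherwise.

For `d ≥ 3` the normalised count is therefore `(1 - X²)(1 + pX + pX²)(1 - p⁻¹X)`, independently of
`d`, and a polynomial is determined by its values at the infinitely many points `X = p⁻ᵐ`.
-/

namespace ASW

noncomputable section

section Residues

variable {p d : ℕ}

lemma isNilpotent_natCast_zmod_pow : IsNilpotent (p : ZMod (p ^ d)) :=
  ⟨d, by exact_mod_cast ZMod.natCast_self (p ^ d)⟩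

lemma isUnit_add_natCast_mul {x : ZMod (p ^ d)} (hx : IsUnit x) (y : ZMod (p ^ d)) :
    IsUnit (x + p * y) :=
  ((Commute.all _ _).isNilpotent_mul_right isNilpotent_natCast_zmod_pow).isUnit_add_left_of_commute
    hx (Commute.all _ _)

variable [Fact p.Prime]

lemma isUnit_or_natCast_dvd (x : ZMod (p ^ d)) : IsUnit x ∨ (p : ZMod (p ^ d)) ∣ x := by
  have hp : p.Prime := Fact.out
  obtain ⟨n, rfl⟩ := ZMod.natCast_zmod_surjective x
  by_cases hn : p ∣ n
  · exact Or.inr (Nat.cast_dvd_cast hn)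
  · exact Or.inl ((ZMod.isUnit_iff_coprime _ _).2 ((hp.coprime_iff_not_dvd.2 hn).symm.pow_right d))

lemma natCast_pow_ne_zero {i : ℕ} (hi : i < d) : (p : ZMod (p ^ d)) ^ i ≠ 0 := by
  have hp : p.Prime := Fact.out
  rw [← Nat.cast_pow, Ne, ZMod.natCast_eq_zero_iff, Nat.pow_dvd_pow_iff_le_right hp.one_lt]
  exact hi.not_ge

lemma not_natCast_pow_succ_dvd {i : ℕ} (hi : i < d) {x : ZMod (p ^ d)} (hx : IsUnit x) :
    ¬ (p : ZMod (p ^ d)) ^ (i + 1) ∣ p ^ i * x := by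
  rintro ⟨y, hy⟩
  have hzero : (p : ZMod (p ^ d)) ^ i * (x + p * -y) = 0 := by linear_combination hy
  exact natCast_pow_ne_zero hi ((isUnit_add_natCast_mul hx (-y)).mul_left_eq_zero.1 hzero)

lemma card_natCast_pow_dvd_mul {i : ℕ} (hi : i ≤ d) :
    Nat.card {r : ZMod (p ^ d) // (p : ZMod (p ^ d)) ^ i ∣ r} * p ^ i = p ^ d := by
  have hmultiples : Nat.card {r : ZMod (p ^ d) // (p : ZMod (p ^ d)) ^ i ∣ r} =
      Nat.card (AddSubgroup.zmultiples ((p ^ i : ℕ) : ZMod (p ^ d))) := by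
    refine Nat.card_congr (Equiv.subtypeEquivRight fun r => ?_)
    rw [AddSubgroup.mem_zmultiples_iff, dvd_def, (ZMod.intCast_surjective (n := p ^ d)).exists]
    simp only [Nat.cast_pow, zsmul_eq_mul, mul_comm, eq_comm]
  rw [hmultiples, Nat.card_zmultiples, ZMod.addOrderOf_coe _ (NeZero.ne _),
    Nat.gcd_eq_right (pow_dvd_pow p hi), Nat.div_mul_cancel (pow_dvd_pow p hi)]

lemma card_forall_natCast_pow_dvd {n i : ℕ} (hi : i ≤ d) :
    (Nat.card {f : Fin n → ZMod (p ^ d) // ∀ j, (p : ZMod (p ^ d)) ^ i ∣ f j} : ℝ) =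
      (p : ℝ) ^ (d * n) * (((p : ℝ)⁻¹) ^ n) ^ i := by
  have hp0 : (p : ℝ) ≠ 0 := NeZero.ne _
  have hcoord : (Nat.card {r : ZMod (p ^ d) // (p : ZMod (p ^ d)) ^ i ∣ r} : ℝ) =
      (p : ℝ) ^ d * ((p : ℝ)⁻¹) ^ i := by
    rw [inv_pow, ← div_eq_mul_inv, eq_div_iff (pow_ne_zero _ hp0)]
    exact_mod_cast card_natCast_pow_dvd_mul hi
  rw [Nat.card_congr (Equiv.subtypePiEquivPi (p := fun _ r => (p : ZMod (p ^ d)) ^ i ∣ r)),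
    Nat.card_pi]
  push_cast
  rw [Finset.prod_const, hcoord, Finset.card_univ, Fintype.card_fin]
  ring

end Residues

section Cardinalities

lemma card_fiber_mul_card_range {G H : Type*} [AddGroup G] [AddGroup H] (φ : G →+ H) {c : H}
    (hc : c ∈ φ.range) : Nat.card {g // φ g = c} * Nat.card φ.range = Nat.card G := by
  obtain ⟨g₀, rfl⟩ := hc
  have hfiber : Nat.card {g // φ g = φ g₀} = Nat.card φ.ker :=
    Nat.card_congr ((Equiv.subRight g₀).subtypeEquiv fun g => by
      rw [Equiv.subRight_apply, AddMonoidHom.mem_ker, map_sub, sub_eq_zero])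
  rw [hfiber, ← AddSubgroup.index_ker, AddSubgroup.card_mul_index]

lemma card_sigma_eq_card_mul {α : Type*} {β : α → Type*} [Finite α] [∀ a, Finite (β a)] {c : ℝ}
    (hc : ∀ a, (Nat.card (β a) : ℝ) = c) : (Nat.card (Σ a, β a) : ℝ) = Nat.card α * c := by
  have := Fintype.ofFinite α
  simp [Nat.card_sigma, hc]

end Cardinalities

section HyperbolicVectors

/-- The hyperbolic module `H⁺_{2n}` over `R`, with its isotropic halves separated: the pair
`(f, g)` has norm `f ⬝ᵥ g`. -/
abbrev HypSpace (R : Type*) (n : ℕ) : Type _ := (Fin n → R) × (Fin n → R)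

/-- The vectors of norm `c` in `H⁺_{2n}`. -/
def hypSphere {R : Type*} [CommRing R] (n : ℕ) (c : R) : Set (HypSpace R n) :=
  {z | z.1 ⬝ᵥ z.2 = c}

lemma dvd_dotProduct {R ι : Type*} [CommRing R] [Fintype ι] {a : R} {f : ι → R}
    (hf : ∀ j, a ∣ f j) (g : ι → R) : a ∣ f ⬝ᵥ g :=
  Finset.dvd_sum fun j _ => (hf j).mul_right _

variable {p d : ℕ} [Fact p.Prime] {n : ℕ}

lemma exists_dotProduct_eq_iff {i : ℕ} {f : Fin n → ZMod (p ^ d)}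
    (hf : ∀ j, (p : ZMod (p ^ d)) ^ i ∣ f j) (hf' : ¬ ∀ j, (p : ZMod (p ^ d)) ^ (i + 1) ∣ f j)
    (c : ZMod (p ^ d)) : (∃ g, f ⬝ᵥ g = c) ↔ (p : ZMod (p ^ d)) ^ i ∣ c := by
  constructor
  · rintro ⟨g, rfl⟩
    exact dvd_dotProduct hf g
  · rintro ⟨y, rfl⟩
    obtain ⟨j, hj⟩ := not_forall.1 hf'
    obtain ⟨u, hu⟩ := hf j
    have hu_unit : IsUnit u := (isUnit_or_natCast_dvd u).resolve_right fun hpu =>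
      hj (by rw [hu, pow_succ]; exact mul_dvd_mul_left _ hpu)
    obtain ⟨w, hw⟩ := hu_unit.dvd (a := y)
    exact ⟨Pi.single j w, by rw [dotProduct_single, hu, hw, mul_assoc]⟩

lemma card_dotProduct_eq_mul {i : ℕ} (hi : i ≤ d) {f : Fin n → ZMod (p ^ d)}
    (hf : ∀ j, (p : ZMod (p ^ d)) ^ i ∣ f j) (hf' : ¬ ∀ j, (p : ZMod (p ^ d)) ^ (i + 1) ∣ f j)
    {c : ZMod (p ^ d)} (hc : (p : ZMod (p ^ d)) ^ i ∣ c) :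
    Nat.card {g // f ⬝ᵥ g = c} * p ^ d = p ^ (d * n) * p ^ i := by
  let φ : (Fin n → ZMod (p ^ d)) →+ ZMod (p ^ d) := AddMonoidHom.mk' (f ⬝ᵥ ·) (dotProduct_add f)
  have hrange : Nat.card φ.range = Nat.card {r : ZMod (p ^ d) // (p : ZMod (p ^ d)) ^ i ∣ r} :=
    Nat.card_congr (Equiv.subtypeEquivRight (exists_dotProduct_eq_iff hf hf'))
  have hcount : Nat.card {g // f ⬝ᵥ g = c} * Nat.card φ.range = p ^ (d * n) := by
    refine (card_fiber_mul_card_range φ ((exists_dotProduct_eq_iff hf hf' c).2 hc)).trans ?_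
    simp [pow_mul]
  calc Nat.card {g // f ⬝ᵥ g = c} * p ^ d
      = Nat.card {g // f ⬝ᵥ g = c} * (Nat.card φ.range * p ^ i) := by
        rw [hrange, card_natCast_pow_dvd_mul hi]
    _ = p ^ (d * n) * p ^ i := by rw [← mul_assoc, hcount]

open Classical in
lemma sum_card_dotProduct_eq_step {i : ℕ} (hi : i < d) {c : ZMod (p ^ d)}
    (hc : (p : ZMod (p ^ d)) ^ i ∣ c) :
    ∑ f : Fin n → ZMod (p ^ d) with ∀ j, (p : ZMod (p ^ d)) ^ i ∣ f j,
        (Nat.card {g // f ⬝ᵥ g = c} : ℝ) =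
      (p : ℝ) ^ (d * (2 * n)) / p ^ d * (1 - (p : ℝ)⁻¹ ^ n) * (p * (p : ℝ)⁻¹ ^ n) ^ i +
      ∑ f : Fin n → ZMod (p ^ d) with ∀ j, (p : ZMod (p ^ d)) ^ (i + 1) ∣ f j,
        (Nat.card {g // f ⬝ᵥ g = c} : ℝ) := by
  have hsub : ({f | ∀ j, (p : ZMod (p ^ d)) ^ (i + 1) ∣ f j} : Finset (Fin n → ZMod (p ^ d))) ⊆
      ({f | ∀ j, (p : ZMod (p ^ d)) ^ i ∣ f j} : Finset (Fin n → ZMod (p ^ d))) :=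
    Finset.monotone_filter_right _ fun f _ hf j => (pow_dvd_pow _ i.le_succ).trans (hf j)
  have hcard (k : ℕ) (hk : k ≤ d) :
      (({f | ∀ j, (p : ZMod (p ^ d)) ^ k ∣ f j} : Finset (Fin n → ZMod (p ^ d))).card : ℝ) =
        (p : ℝ) ^ (d * n) * ((p : ℝ)⁻¹ ^ n) ^ k := by
    rw [← card_forall_natCast_pow_dvd hk, Nat.card_eq_fintype_card, Fintype.card_subtype]
  have hexact (f : Fin n → ZMod (p ^ d))
      (hf : f ∈ ({f | ∀ j, (p : ZMod (p ^ d)) ^ i ∣ f j} : Finset (Fin n → ZMod (p ^ d))) \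
        ({f | ∀ j, (p : ZMod (p ^ d)) ^ (i + 1) ∣ f j} : Finset (Fin n → ZMod (p ^ d)))) :
      (Nat.card {g // f ⬝ᵥ g = c} : ℝ) = (p : ℝ) ^ (d * n) * p ^ i / p ^ d := by
    simp only [Finset.mem_sdiff, Finset.mem_filter, Finset.mem_univ, true_and] at hf
    rw [eq_div_iff (pow_ne_zero _ (NeZero.ne _))]
    exact_mod_cast card_dotProduct_eq_mul hi.le hf.1 hf.2 hc
  rw [← Finset.sum_sdiff hsub, Finset.sum_congr rfl hexact, Finset.sum_const, nsmul_eq_mul,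
    Finset.cast_card_sdiff hsub, hcard i hi.le, hcard (i + 1) hi]
  ring

lemma card_hypSphere {v : ℕ} (hv : v < d) {x : ZMod (p ^ d)} (hx : IsUnit x) :
    (Nat.card (hypSphere n (p ^ v * x)) : ℝ) = (p : ℝ) ^ (d * (2 * n)) / p ^ d *
      (1 - (p : ℝ)⁻¹ ^ n) * ∑ i ∈ Finset.range (v + 1), (p * (p : ℝ)⁻¹ ^ n) ^ i := by
  classical
  set c : ZMod (p ^ d) := p ^ v * x
  have htelescope (k : ℕ) (hk : k ≤ v + 1) :
      ∑ f : Fin n → ZMod (p ^ d), (Nat.card {g // f ⬝ᵥ g = c} : ℝ) =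
        (p : ℝ) ^ (d * (2 * n)) / p ^ d * (1 - (p : ℝ)⁻¹ ^ n) *
          ∑ i ∈ Finset.range k, (p * (p : ℝ)⁻¹ ^ n) ^ i +
        ∑ f : Fin n → ZMod (p ^ d) with ∀ j, (p : ZMod (p ^ d)) ^ k ∣ f j,
          (Nat.card {g // f ⬝ᵥ g = c} : ℝ) := by
    induction k with
    | zero => simp
    | succ k ih =>
      have hdvd : (p : ZMod (p ^ d)) ^ k ∣ c := (pow_dvd_pow _ (by omega)).mul_right x
      rw [ih (by omega), sum_card_dotProduct_eq_step (by omega) hdvd, Finset.sum_range_succ]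
      ring
  have hlast (f : Fin n → ZMod (p ^ d)) (hf : ∀ j, (p : ZMod (p ^ d)) ^ (v + 1) ∣ f j) :
      Nat.card {g // f ⬝ᵥ g = c} = 0 :=
    have : IsEmpty {g // f ⬝ᵥ g = c} :=
      ⟨fun g => not_natCast_pow_succ_dvd hv hx ((dvd_dotProduct hf g.1).trans g.2.dvd)⟩
    Nat.card_of_isEmpty
  have hfibers : Nat.card (hypSphere n c) = ∑ f : Fin n → ZMod (p ^ d),
      Nat.card {g // f ⬝ᵥ g = c} :=
    (Nat.card_congr (Equiv.subtypeProdEquivSigmaSubtype fun f g : Fin n → ZMod (p ^ d) =>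
      f ⬝ᵥ g = c)).trans Nat.card_sigma
  rw [hfibers, Nat.cast_sum, htelescope (v + 1) le_rfl, add_eq_left]
  exact Finset.sum_eq_zero fun f hf => by
    rw [hlast f (Finset.mem_filter.1 hf).2, Nat.cast_zero]

end HyperbolicVectors

section HyperbolicSlices

/-- The vectors `v` of norm `β` in `H⁺_{2n}` whose inner product with `u` is `γ`. -/
def hypSlice {R : Type*} [CommRing R] {n : ℕ} (u : HypSpace R n) (γ β : R) :
    Set (HypSpace R n) :=
  {v | u.1 ⬝ᵥ v.2 + v.1 ⬝ᵥ u.2 = γ ∧ v.1 ⬝ᵥ v.2 = β}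

variable {R : Type*} [CommRing R] {m : ℕ}

/-- The coordinate `i₀` of `H⁺_{2(m+1)}` split off as a hyperbolic plane. -/
def hypSplit (i₀ : Fin (m + 1)) :
    (R × (Fin m → R)) × (R × (Fin m → R)) ≃ HypSpace R (m + 1) :=
  (Fin.insertNthEquiv (fun _ => R) i₀).prodCongr (Fin.insertNthEquiv (fun _ => R) i₀)

lemma insertNthEquiv_dotProduct (i₀ : Fin (m + 1)) (v w : R × (Fin m → R)) :
    Fin.insertNthEquiv (fun _ => R) i₀ v ⬝ᵥ Fin.insertNthEquiv (fun _ => R) i₀ w =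
      v.1 * w.1 + v.2 ⬝ᵥ w.2 := by
  simp [dotProduct, Fin.sum_univ_succAbove _ i₀]

/-- `hypSlice` in the coordinates of `hypSplit`, for `u = ((a, F), (b, G))`. -/
def splitSlice (a b : R) (F G : Fin m → R) (γ β : R) :
    Set ((R × (Fin m → R)) × (R × (Fin m → R))) :=
  {v | (a * v.2.1 + F ⬝ᵥ v.2.2) + (v.1.1 * b + v.1.2 ⬝ᵥ G) = γ ∧
    v.1.1 * v.2.1 + v.1.2 ⬝ᵥ v.2.2 = β}

/-- Subtracting from `v` the multiple `t • u` of `u` with the same first coordinate leaves a vector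
`(0, h; s, k)` of norm `h ⬝ᵥ k`; its inner product with `u` determines `s`. -/
def splitSliceEquiv (a : Rˣ) (b : R) (F G : Fin m → R) (γ β : R) :
    splitSlice (a : R) b F G γ β ≃
      {w : R × HypSpace R m //
        w.2 ∈ hypSphere m (β - γ * w.1 + (a * b + F ⬝ᵥ G) * w.1 ^ 2)} where
  toFun v := ⟨(↑a⁻¹ * v.1.1.1,
    (v.1.1.2 - (↑a⁻¹ * v.1.1.1) • F, v.1.2.2 - (↑a⁻¹ * v.1.1.1) • G)), by
      obtain ⟨⟨⟨x, f⟩, ⟨y, g⟩⟩, hinner, hnorm⟩ := v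
      obtain ⟨t, rfl⟩ : ∃ t, x = a * t := ⟨↑a⁻¹ * x, by simp⟩
      simp only [hypSphere, Set.mem_ofPred_eq, Units.inv_mul_cancel_left, sub_dotProduct,
        dotProduct_sub, smul_dotProduct, dotProduct_smul, smul_eq_mul] at hinner hnorm ⊢
      linear_combination hnorm - t * hinner⟩
  invFun w := ⟨((a * w.1.1, w.1.2.1 + w.1.1 • F),
    (w.1.1 * b + ↑a⁻¹ * (γ - 2 * w.1.1 * (a * b + F ⬝ᵥ G) - (F ⬝ᵥ w.1.2.2 + w.1.2.1 ⬝ᵥ G)),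
      w.1.2.2 + w.1.1 • G)), by
      obtain ⟨⟨t, h, k⟩, hnorm⟩ := w
      simp only [hypSphere, splitSlice, Set.mem_ofPred_eq, add_dotProduct, dotProduct_add,
        smul_dotProduct, dotProduct_smul, smul_eq_mul, mul_add, Units.mul_inv_cancel_left,
        mul_right_comm (a : R) t] at hnorm ⊢
      constructor
      · ring
      · linear_combination hnorm⟩
  left_inv v := by
    obtain ⟨⟨⟨x, f⟩, ⟨y, g⟩⟩, hinner, hnorm⟩ := v
    obtain ⟨t, rfl⟩ : ∃ t, x = a * t := ⟨↑a⁻¹ * x, by simp⟩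
    refine Subtype.ext ?_
    simp only [Units.inv_mul_cancel_left, sub_dotProduct, dotProduct_sub, smul_dotProduct,
      dotProduct_smul, smul_eq_mul, sub_add_cancel, Prod.mk.injEq, true_and, and_true] at hinner ⊢
    linear_combination -(↑a⁻¹ : R) * hinner + (y - t * b) * a.inv_mul
  right_inv w := by
    obtain ⟨⟨t, h, k⟩, hnorm⟩ := w
    simp

lemma card_hypSlice_of_isUnit_left {u : HypSpace R (m + 1)} {i₀ : Fin (m + 1)}
    (hu : IsUnit (u.1 i₀)) (γ β : R) :
    Nat.card (hypSlice u γ β) =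
      Nat.card (Σ t : R, hypSphere m (β - γ * t + (u.1 ⬝ᵥ u.2) * t ^ 2)) := by
  obtain ⟨⟨⟨a, F⟩, ⟨b, G⟩⟩, rfl⟩ := (hypSplit i₀).surjective u
  obtain ⟨a, rfl⟩ : IsUnit a := by simpa [hypSplit] using hu
  have hslice : Nat.card (splitSlice (a : R) b F G γ β) =
      Nat.card (hypSlice (hypSplit i₀ ((↑a, F), (b, G))) γ β) :=
    Nat.card_congr ((hypSplit i₀).subtypeEquiv fun v => by
      simp only [hypSplit, splitSlice, hypSlice, Equiv.prodCongr_apply, Prod.map,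
        insertNthEquiv_dotProduct, Set.mem_ofPred_eq])
  rw [← hslice, Nat.card_congr (splitSliceEquiv a b F G γ β), Nat.card_congr
    (Equiv.subtypeProdEquivSigmaSubtype fun (t : R) (w : HypSpace R m) =>
      w ∈ hypSphere m (β - γ * t + (a * b + F ⬝ᵥ G) * t ^ 2))]
  simp only [hypSplit, Equiv.prodCongr_apply, Prod.map, insertNthEquiv_dotProduct]

lemma card_hypSlice_swap {n : ℕ} (u : HypSpace R n) (γ β : R) :
    Nat.card (hypSlice u.swap γ β) = Nat.card (hypSlice u γ β) :=
  Nat.card_congr ((Equiv.prodComm _ _).subtypeEquiv fun v => by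
    simp only [hypSlice, Set.mem_ofPred_eq, Equiv.prodComm_apply, Prod.fst_swap, Prod.snd_swap,
      dotProduct_comm, add_comm])

lemma card_hypSlice {u : HypSpace R (m + 1)} {i₀ : Fin (m + 1)}
    (hu : IsUnit (u.1 i₀) ∨ IsUnit (u.2 i₀)) (γ β : R) :
    Nat.card (hypSlice u γ β) =
      Nat.card (Σ t : R, hypSphere m (β - γ * t + (u.1 ⬝ᵥ u.2) * t ^ 2)) := by
  rcases hu with hu | hu
  · exact card_hypSlice_of_isUnit_left hu γ β
  · rw [← card_hypSlice_swap, card_hypSlice_of_isUnit_left (u := u.swap) hu, Prod.fst_swap,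
      Prod.snd_swap, dotProduct_comm]

variable {p d : ℕ} [Fact p.Prime]

lemma exists_isUnit_coord {n : ℕ} (hd : 2 ≤ d) {u : HypSpace (ZMod (p ^ d)) n}
    {x : ZMod (p ^ d)} (hx : IsUnit x) (hu : u.1 ⬝ᵥ u.2 = p * x) :
    ∃ i, IsUnit (u.1 i) ∨ IsUnit (u.2 i) := by
  by_contra! hnonunit
  have hdvd : (p : ZMod (p ^ d)) ^ (1 + 1) ∣ p ^ 1 * x := by
    rw [pow_one, ← hu, pow_succ, pow_one]
    exact Finset.dvd_sum fun i _ => mul_dvd_mul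
      ((isUnit_or_natCast_dvd _).resolve_left (hnonunit i).1)
      ((isUnit_or_natCast_dvd _).resolve_left (hnonunit i).2)
  exact not_natCast_pow_succ_dvd hd hx hdvd

open Classical in
lemma card_hypSphere_quadratic (hd : 3 ≤ d) {x y z : ZMod (p ^ d)} (hx : IsUnit x)
    (hy : IsUnit y) (t : ZMod (p ^ d)) :
    (Nat.card (hypSphere m (p ^ 2 * y - p ^ 2 * z * t + p * x * t ^ 2)) : ℝ) =
      (p : ℝ) ^ (d * (2 * m)) / p ^ d * (1 - (p : ℝ)⁻¹ ^ m) *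
        (1 + p * (p : ℝ)⁻¹ ^ m +
          if (p : ZMod (p ^ d)) ∣ t then (p * (p : ℝ)⁻¹ ^ m) ^ 2 else 0) := by
  split_ifs with ht
  · obtain ⟨s, rfl⟩ := ht
    have hunit : IsUnit (y + p * (x * s ^ 2 - z * s)) := isUnit_add_natCast_mul hy _
    rw [show (p : ZMod (p ^ d)) ^ 2 * y - p ^ 2 * z * (p * s) + p * x * (p * s) ^ 2 =
      p ^ 2 * (y + p * (x * s ^ 2 - z * s)) by ring, card_hypSphere hd hunit]
    simp [Finset.sum_range_succ]
  · have ht_unit : IsUnit t := (isUnit_or_natCast_dvd t).resolve_right ht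
    have hunit : IsUnit (x * t ^ 2 + p * (y - z * t)) :=
      isUnit_add_natCast_mul (hx.mul (ht_unit.pow 2)) _
    rw [show (p : ZMod (p ^ d)) ^ 2 * y - p ^ 2 * z * t + p * x * t ^ 2 =
      p ^ 1 * (x * t ^ 2 + p * (y - z * t)) by ring, card_hypSphere (by omega) hunit]
    simp [Finset.sum_range_succ]

lemma card_hypSlice_zmod (hd : 3 ≤ d) {x y z : ZMod (p ^ d)} (hx : IsUnit x) (hy : IsUnit y)
    {u : HypSpace (ZMod (p ^ d)) (m + 1)} (hu : u ∈ hypSphere (m + 1) (p * x)) :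
    (Nat.card (hypSlice u (p ^ 2 * z) (p ^ 2 * y)) : ℝ) =
      (p : ℝ) ^ (d * (2 * m)) * (1 - (p : ℝ)⁻¹ ^ m) *
        (1 + p * (p : ℝ)⁻¹ ^ m + p * ((p : ℝ)⁻¹ ^ m) ^ 2) := by
  classical
  have hp0 : (p : ℝ) ≠ 0 := NeZero.ne _
  obtain ⟨i₀, hi₀⟩ := exists_isUnit_coord (by omega) hx hu
  have hmultiples : (Finset.card {t : ZMod (p ^ d) | (p : ZMod (p ^ d)) ∣ t} : ℝ) * p = p ^ d := by
    rw [← Fintype.card_subtype, ← Nat.card_eq_fintype_card]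
    exact_mod_cast (by simpa using card_natCast_pow_dvd_mul (p := p) (show 1 ≤ d by omega))
  rw [card_hypSlice hi₀, show u.1 ⬝ᵥ u.2 = p * x from hu, Nat.card_sigma, Nat.cast_sum]
  simp only [card_hypSphere_quadratic hd hx hy]
  rw [← Finset.mul_sum, Finset.sum_add_distrib, ← Finset.sum_filter, Finset.sum_const,
    Finset.sum_const, Finset.card_univ, ZMod.card, nsmul_eq_mul, nsmul_eq_mul,
    eq_div_of_mul_eq hp0 hmultiples, Nat.cast_pow]
  field_simp

end HyperbolicSlices

section LevelForm

variable {R : Type*} [CommRing R]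

/-- The tuples of vectors on which `Q` has the Gram data `g`, in the convention of `gramOf`: values
of `Q` on the diagonal, of its polar form off the diagonal. -/
def gramSet {V : Type*} [AddCommGroup V] {r : ℕ} (Q : V → R) (g : Matrix (Fin r) (Fin r) R) :
    Set (Fin r → V) :=
  {y | (∀ j, Q (y j) = g j j) ∧ ∀ j l, j ≠ l → QuadraticMap.polar Q (y j) (y l) = g j l}

lemma mem_gramSet_diag {V : Type*} [AddCommGroup V] {Q : V → R} {A B : R} {y : Fin 2 → V} :
    y ∈ gramSet Q !![A, 0; 0, B] ↔
      Q (y 0) = A ∧ Q (y 1) = B ∧ QuadraticMap.polar Q (y 0) (y 1) = 0 := by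
  simp [gramSet, Fin.forall_fin_two, and_assoc, QuadraticMap.polar_comm Q (y 1)]

/-- The quadratic form of `δ(N) ⊥ H⁺_{2m}`, with the hyperbolic plane of `δ(N)` (after a change of
sign in one coordinate) absorbed into the hyperbolic part, so that `n = m + 1`. -/
def levelForm {n : ℕ} (N : R) (v : R × HypSpace R n) : R :=
  -N * v.1 ^ 2 + v.2.1 ⬝ᵥ v.2.2

lemma polar_levelForm {n : ℕ} (N : R) (v w : R × HypSpace R n) :
    QuadraticMap.polar (levelForm N) v w =
      -(2 * N * v.1 * w.1) + (v.2.1 ⬝ᵥ w.2.2 + w.2.1 ⬝ᵥ v.2.2) := by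
  simp only [QuadraticMap.polar, levelForm, Prod.fst_add, Prod.snd_add, add_dotProduct,
    dotProduct_add]
  ring

lemma mem_gramSet_levelForm {n : ℕ} {N A B : R} {y : Fin 2 → R × HypSpace R n} :
    y ∈ gramSet (levelForm N) !![A, 0; 0, B] ↔
      (y 0).2 ∈ hypSphere n (A + N * (y 0).1 ^ 2) ∧
        (y 1).2 ∈ hypSlice (y 0).2 (2 * N * (y 0).1 * (y 1).1) (B + N * (y 1).1 ^ 2) := by
  rw [mem_gramSet_diag, polar_levelForm]
  simp only [levelForm, hypSphere, hypSlice, Set.mem_ofPred_eq, neg_mul, neg_add_eq_iff_eq_add,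
    add_zero, add_comm (N * _), and_comm (a := _ ⬝ᵥ _ + _ ⬝ᵥ _ = _)]

/-- A pair of vectors with diagonal Gram matrix, listed as its level coordinates `(a, b)`, then the
hyperbolic part of the first vector, then that of the second. -/
def gramSetLevelFormEquiv (n : ℕ) (N A B : R) :
    gramSet (levelForm (n := n) N) !![A, 0; 0, B] ≃
      Σ w : (Σ ab : R × R, hypSphere n (A + N * ab.1 ^ 2)),
        hypSlice w.2.1 (2 * N * w.1.1 * w.1.2) (B + N * w.1.2 ^ 2) where
  toFun y := ⟨⟨((y.1 0).1, (y.1 1).1), ⟨(y.1 0).2, (mem_gramSet_levelForm.1 y.2).1⟩⟩,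
    ⟨(y.1 1).2, (mem_gramSet_levelForm.1 y.2).2⟩⟩
  invFun w := ⟨![(w.1.1.1, w.1.2.1), (w.1.1.2, w.2.1)],
    mem_gramSet_levelForm.2 ⟨w.1.2.2, w.2.2⟩⟩
  left_inv _ := Subtype.ext (funext (Fin.forall_fin_two.2 ⟨rfl, rfl⟩))
  right_inv _ := rfl

lemma card_gramSet_levelForm_eq_mul [Finite R] {n : ℕ} {N A B : R} {s t : ℝ}
    (hs : ∀ a, (Nat.card (hypSphere n (A + N * a ^ 2)) : ℝ) = s)
    (ht : ∀ a b, ∀ u ∈ hypSphere n (A + N * a ^ 2),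
      (Nat.card (hypSlice u (2 * N * a * b) (B + N * b ^ 2)) : ℝ) = t) :
    (Nat.card (gramSet (levelForm (n := n) N) !![A, 0; 0, B]) : ℝ) =
      (Nat.card R : ℝ) ^ 2 * s * t := by
  calc (Nat.card (gramSet (levelForm (n := n) N) !![A, 0; 0, B]) : ℝ)
      = Nat.card (Σ w : (Σ ab : R × R, hypSphere n (A + N * ab.1 ^ 2)),
          hypSlice w.2.1 (2 * N * w.1.1 * w.1.2) (B + N * w.1.2 ^ 2)) := by
        rw [Nat.card_congr (gramSetLevelFormEquiv n N A B)]
    _ = Nat.card (Σ ab : R × R, hypSphere n (A + N * ab.1 ^ 2)) * t :=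
        card_sigma_eq_card_mul fun w => ht w.1.1 w.1.2 w.2.1 w.2.2
    _ = Nat.card (R × R) * s * t :=
        congrArg (· * t) (card_sigma_eq_card_mul fun ab => hs ab.1)
    _ = (Nat.card R : ℝ) ^ 2 * s * t := by rw [Nat.card_prod, Nat.cast_mul, sq]

variable {p d m : ℕ} [Fact p.Prime]

lemma card_hypSphere_natCast_mul (hd : 2 ≤ d) {x : ZMod (p ^ d)} (hx : IsUnit x) :
    (Nat.card (hypSphere (m + 1) (p * x)) : ℝ) =
      (p : ℝ) ^ (d * (2 * m + 1)) * (1 - (p : ℝ)⁻¹ ^ (m + 1)) * (1 + (p : ℝ)⁻¹ ^ m) := by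
  have hp0 : (p : ℝ) ≠ 0 := NeZero.ne _
  have hcard := card_hypSphere (p := p) (n := m + 1) (v := 1) hd hx
  rw [pow_one] at hcard
  rw [hcard, Finset.sum_range_succ, Finset.sum_range_one, pow_succ (p : ℝ)⁻¹ m]
  field_simp
  ring

lemma card_gramSet_levelForm (hd : 3 ≤ d) {e₁ e₂ n : ZMod (p ^ d)} (he₁ : IsUnit e₁)
    (he₂ : ∀ b, IsUnit (e₂ + n * b ^ 2)) :
    (Nat.card (gramSet (levelForm (n := m + 1) (p ^ 2 * n))
        !![e₁ * p, 0; 0, e₂ * p ^ 2]) : ℝ) =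
      (p : ℝ) ^ (d * (4 * m + 3)) * ((1 + (p : ℝ)⁻¹ ^ m) * (1 - (p : ℝ)⁻¹ ^ m) *
        (1 + p * (p : ℝ)⁻¹ ^ m + p * ((p : ℝ)⁻¹ ^ m) ^ 2) * (1 - (p : ℝ)⁻¹ ^ (m + 1))) := by
  have hlevel (a : ZMod (p ^ d)) :
      e₁ * p + p ^ 2 * n * a ^ 2 = p * (e₁ + p * (n * a ^ 2)) := by ring
  have hunit (a : ZMod (p ^ d)) : IsUnit (e₁ + p * (n * a ^ 2)) := isUnit_add_natCast_mul he₁ _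
  have hfirst (a : ZMod (p ^ d)) :
      (Nat.card (hypSphere (m + 1) (e₁ * p + p ^ 2 * n * a ^ 2)) : ℝ) =
        (p : ℝ) ^ (d * (2 * m + 1)) * (1 - (p : ℝ)⁻¹ ^ (m + 1)) * (1 + (p : ℝ)⁻¹ ^ m) := by
    rw [hlevel, card_hypSphere_natCast_mul (by omega) (hunit a)]
  have hsecond (a b : ZMod (p ^ d)) (u : HypSpace (ZMod (p ^ d)) (m + 1))
      (hu : u ∈ hypSphere (m + 1) (e₁ * p + p ^ 2 * n * a ^ 2)) :
      (Nat.card (hypSlice u (2 * (p ^ 2 * n) * a * b) (e₂ * p ^ 2 + p ^ 2 * n * b ^ 2)) : ℝ) =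
        (p : ℝ) ^ (d * (2 * m)) * (1 - (p : ℝ)⁻¹ ^ m) *
          (1 + p * (p : ℝ)⁻¹ ^ m + p * ((p : ℝ)⁻¹ ^ m) ^ 2) := by
    rw [hlevel] at hu
    rw [show 2 * ((p : ZMod (p ^ d)) ^ 2 * n) * a * b = p ^ 2 * (2 * n * a * b) by ring,
      show e₂ * (p : ZMod (p ^ d)) ^ 2 + p ^ 2 * n * b ^ 2 = p ^ 2 * (e₂ + n * b ^ 2) by ring]
    exact card_hypSlice_zmod hd (hunit a) (he₂ b) hu
  rw [card_gramSet_levelForm_eq_mul hfirst hsecond, Nat.card_zmod, Nat.cast_pow]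
  ring

end LevelForm

section Reduction

variable {O R W V : Type*} [CommRing O] [CommRing R] [AddCommGroup W] [Module O W]
  [AddCommGroup V] {π : O} {d : ℕ}

lemma modQuot_mk_eq_iff {φ : W →+ V} (hφ : ∀ x, φ x = 0 ↔ ∃ w, π ^ d • w = x) {x y : W} :
    (Submodule.Quotient.mk x : modQuot (π ^ d) W) = Submodule.Quotient.mk y ↔ φ x = φ y := by
  rw [Submodule.Quotient.eq, Submodule.ideal_span_singleton_smul,
    Submodule.mem_smul_pointwise_iff_exists, ← sub_eq_zero (a := φ x), ← map_sub, hφ]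
  simp

lemma repCount_eq_card_gramSet {σ : O →+* R} (hσ : ∀ a, σ a = 0 ↔ π ^ d ∣ a) {φ : W →+ V}
    (hφ_surj : Surjective φ) (hφ : ∀ x, φ x = 0 ↔ ∃ w, π ^ d • w = x) {QW : QuadraticForm O W}
    {QV : V → R} (hQ : ∀ x, QV (φ x) = σ (QW x)) {r : ℕ} (g : Fin r → Fin r → O) :
    repCount π d QW g = Nat.card (gramSet QV ((Matrix.of g).map σ)) := by
  have hpolar (x y : W) :
      QuadraticMap.polar QV (φ x) (φ y) = σ (QuadraticMap.polar QW x y) := by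
    simp only [QuadraticMap.polar, ← map_add φ, hQ, map_sub]
  have hmem (x : Fin r → W) : ((∀ j, π ^ d ∣ QW (x j) - g j j) ∧
      ∀ j l, j ≠ l → π ^ d ∣ QuadraticMap.polar QW (x j) (x l) - g j l) ↔
      φ ∘ x ∈ gramSet QV ((Matrix.of g).map σ) := by
    simp only [gramSet, Set.mem_ofPred_eq, comp_apply, Matrix.map_apply, Matrix.of_apply,
      hQ, hpolar, ← hσ, map_sub, sub_eq_zero]
  obtain ⟨s, hs⟩ := hφ_surj.hasRightInverse
  let lift (y : Fin r → V) (j : Fin r) : modQuot (π ^ d) W := Submodule.Quotient.mk (s (y j))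
  have hlift : Injective lift := fun y z hyz => funext fun j => by
    simpa only [hs (y j), hs (z j)] using (modQuot_mk_eq_iff hφ).1 (congrFun hyz j)
  have himage : repSet π d QW g = lift '' gramSet QV ((Matrix.of g).map σ) := by
    ext z
    constructor
    · rintro ⟨x, hx, rfl⟩
      exact ⟨φ ∘ x, (hmem x).1 hx, funext fun j => (modQuot_mk_eq_iff hφ).2 (hs _)⟩
    · rintro ⟨y, hy, rfl⟩
      exact ⟨s ∘ y, (hmem _).2 (by rwa [← comp_assoc, hs.comp_eq_id, id_comp]), rfl⟩
  rw [repCount, himage, Nat.card_image_of_injective hlift]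

end Reduction

section LevelCoordinates

variable {O R : Type*} [CommRing O] [CommRing R] {m n : ℕ}

/-- The basis vectors of `H⁺_{2m}` grouped into hyperbolic pairs: `(i, j) ↦ 2 * i + j`. -/
def hypPairEquiv (m : ℕ) : Fin m × Fin 2 ≃ Fin (2 * m) :=
  finProdFinEquiv.trans (finCongr (mul_comm m 2))

lemma toQuadraticForm'_apply_eq_sum {ι : Type*} [Fintype ι] [DecidableEq ι] (A : Matrix ι ι O)
    (x : ι → O) : Matrix.toQuadraticForm' A x = ∑ i, ∑ j, x i * x j * A i j := by
  simp [Matrix.toQuadraticForm', Matrix.toLinearMap₂'_apply, mul_assoc]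

lemma delta_apply (c : O) (x : Fin 3 → O) : delta O c x = -c * x 0 ^ 2 - x 1 * x 2 := by
  refine (toQuadraticForm'_apply_eq_sum _ x).trans ?_
  simp only [Fin.sum_univ_three, Matrix.of_apply, Matrix.cons_val', Matrix.cons_val_fin_one,
    Matrix.cons_val_zero, Matrix.cons_val_one, Matrix.cons_val]
  ring

lemma hyp_apply (x : Fin (2 * m) → O) :
    hyp O m x = ∑ i, x (hypPairEquiv m (i, 0)) * x (hypPairEquiv m (i, 1)) := by
  have hpair (i i' : Fin m) (j j' : Fin 2) :
      ((hypPairEquiv m (i, j) : ℕ) % 2 = 0 ∧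
        (hypPairEquiv m (i', j') : ℕ) = hypPairEquiv m (i, j) + 1) ↔
      j = 0 ∧ j' = 1 ∧ i' = i := by
    simp only [hypPairEquiv, Equiv.trans_apply, finProdFinEquiv_apply_val, finCongr_apply,
      Fin.val_cast, Fin.ext_iff, Nat.add_mul_mod_self_left, Fin.coe_ofNat_eq_mod, Nat.zero_mod,
      Nat.mod_succ]
    omega
  refine (toQuadraticForm'_apply_eq_sum _ x).trans ?_
  simp only [← (hypPairEquiv m).sum_comp, Fintype.sum_prod_type, Fin.sum_univ_two,
    Matrix.of_apply, hpair]
  simp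

/-- Coordinates in which the quadratic form of `δ(c) ⊥ H⁺_{2m}` is `levelForm c`. -/
def levelCoords (O : Type*) [CommRing O] (m : ℕ) :
    ((Fin 3 → O) × (Fin (2 * m) → O)) ≃ₗ[O] O × HypSpace O (m + 1) where
  toFun x := (x.1 0, Fin.cons (-x.1 1) fun i => x.2 (hypPairEquiv m (i, 0)),
    Fin.cons (x.1 2) fun i => x.2 (hypPairEquiv m (i, 1)))
  invFun v := (![v.1, -v.2.1 0, v.2.2 0],
    fun j => ![v.2.1, v.2.2] ((hypPairEquiv m).symm j).2 ((hypPairEquiv m).symm j).1.succ)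
  map_add' x y := by
    refine Prod.ext rfl (Prod.ext (funext fun i => ?_) (funext fun i => ?_)) <;>
      cases i using Fin.cases <;> simp [add_comm]
  map_smul' c x := by
    refine Prod.ext rfl (Prod.ext (funext fun i => ?_) (funext fun i => ?_)) <;>
      cases i using Fin.cases <;> simp
  left_inv x := by
    refine Prod.ext (funext fun i => ?_) (funext fun j => ?_)
    · fin_cases i <;> simp
    · obtain ⟨⟨i, j⟩, rfl⟩ := (hypPairEquiv m).surjective j
      fin_cases j <;> simp
  right_inv v := by
    refine Prod.ext rfl (Prod.ext (funext fun i => ?_) (funext fun i => ?_)) <;>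
      cases i using Fin.cases <;> simp

lemma levelForm_levelCoords (c : O) (x : (Fin 3 → O) × (Fin (2 * m) → O)) :
    levelForm c (levelCoords O m x) = ((delta O c).prod (hyp O m)) x := by
  rw [QuadraticMap.prod_apply, delta_apply, hyp_apply]
  simp only [levelForm, levelCoords, LinearEquiv.coe_mk, LinearMap.coe_mk, AddHom.coe_mk,
    dotProduct, Fin.sum_univ_succ, Fin.cons_zero, Fin.cons_succ]
  ring

/-- Coordinatewise application of a ring homomorphism to `O × H⁺_{2n}`. -/
def levelMap (σ : O →+* R) (n : ℕ) : O × HypSpace O n →+ R × HypSpace R n :=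
  (σ : O →+ R).prodMap (((σ : O →+ R).compLeft _).prodMap ((σ : O →+ R).compLeft _))

lemma levelForm_levelMap (σ : O →+* R) (c : O) (v : O × HypSpace O n) :
    levelForm (σ c) (levelMap σ n v) = σ (levelForm c v) := by
  simp [levelForm, levelMap, dotProduct]

lemma levelMap_surjective {σ : O →+* R} (hσ : Surjective σ) : Surjective (levelMap σ n) :=
  hσ.prodMap (hσ.comp_left.prodMap hσ.comp_left)

lemma levelMap_eq_zero_iff {σ : O →+* R} {a : O} (hσ : ∀ x, σ x = 0 ↔ a ∣ x)
    (v : O × HypSpace O n) : levelMap σ n v = 0 ↔ ∃ w, a • w = v := by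
  simp only [levelMap, AddMonoidHom.coe_prodMap, Prod.ext_iff, Prod.map_fst, Prod.map_snd,
    AddMonoidHom.compLeft_apply, funext_iff, comp_apply, Prod.fst_zero, Prod.snd_zero,
    Pi.zero_apply, AddMonoidHom.coe_coe, hσ, dvd_def, Classical.skolem, Prod.exists, Prod.smul_fst,
    Prod.smul_snd, Pi.smul_apply, smul_eq_mul, eq_comm (b := a * _)]
  simp

lemma gramOf_diag (A B : O) :
    Matrix.of (gramOf (Matrix.toQuadraticForm' !![A, 0; 0, B])) = !![A, 0; 0, B] := by
  ext i j
  fin_cases i <;> fin_cases j <;>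
    simp [gramOf, toQuadraticForm'_apply_eq_sum, Fin.sum_univ_two, QuadraticMap.polar]

lemma repCount_delta_prod_hyp {π : O} {d : ℕ} {σ : O →+* R} (hσ_surj : Surjective σ)
    (hσ : ∀ a, σ a = 0 ↔ π ^ d ∣ a) (m : ℕ) (c A B : O) :
    repCount π d ((delta O c).prod (hyp O m)) (gramOf (Matrix.toQuadraticForm' !![A, 0; 0, B])) =
      Nat.card (gramSet (levelForm (n := m + 1) (σ c)) !![σ A, 0; 0, σ B]) := by
  have hker (x : (Fin 3 → O) × (Fin (2 * m) → O)) :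
      levelMap σ (m + 1) (levelCoords O m x) = 0 ↔ ∃ w, π ^ d • w = x := by
    rw [levelMap_eq_zero_iff hσ, (levelCoords O m).surjective.exists]
    simp only [← map_smul, (levelCoords O m).injective.eq_iff]
  have hform (x : (Fin 3 → O) × (Fin (2 * m) → O)) :
      levelForm (σ c) (levelMap σ (m + 1) (levelCoords O m x)) =
        σ (((delta O c).prod (hyp O m)) x) := by
    rw [levelForm_levelMap, levelForm_levelCoords]
  have hdiag : !![A, 0; 0, B].map σ = !![σ A, 0; 0, σ B] := by
    simp [← Matrix.ext_iff, Fin.forall_fin_two]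
  rw [repCount_eq_card_gramSet hσ
    (φ := (levelMap σ (m + 1)).comp (levelCoords O m).toAddEquiv.toAddMonoidHom)
    ((levelMap_surjective hσ_surj).comp (levelCoords O m).surjective) hker hform, gramOf_diag,
    hdiag]

end LevelCoordinates

section Anisotropy

lemma exists_sq_eq_of_sub_mem_maximalIdeal {A : Type*} [CommRing A] [IsLocalRing A]
    [HenselianRing A (IsLocalRing.maximalIdeal A)] (h2 : IsUnit (2 : A)) {b c : A} (hb : IsUnit b)
    (hbc : b ^ 2 - c ∈ IsLocalRing.maximalIdeal A) : ∃ s, s ^ 2 = c := by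
  obtain ⟨s, hs, -⟩ := HenselianRing.is_henselian (I := IsLocalRing.maximalIdeal A)
    (Polynomial.X ^ 2 - Polynomial.C c) (Polynomial.monic_X_pow_sub_C c two_ne_zero) b
    (by simpa using hbc)
    (by simpa [one_add_one_eq_two] using
      (h2.mul hb).map (Ideal.Quotient.mk (IsLocalRing.maximalIdeal A)))
  exact ⟨s, by simpa [Polynomial.IsRoot, sub_eq_zero] using hs⟩

lemma exists_eq_neg_mul_sq_of_not_isUnit {A : Type*} [CommRing A] [IsLocalRing A]
    [HenselianRing A (IsLocalRing.maximalIdeal A)] (h2 : IsUnit (2 : A)) {ε n b : A}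
    (hε : IsUnit ε) (hb : ¬ IsUnit (ε + n * b ^ 2)) : ∃ s, IsUnit s ∧ n = -(ε * s ^ 2) := by
  have hnb : IsUnit (n * b ^ 2) := by
    rw [← IsUnit.neg_iff]
    have hsum : IsUnit ((ε + n * b ^ 2) + -(n * b ^ 2)) := by rwa [add_neg_cancel_right]
    exact (IsLocalRing.isUnit_or_isUnit_of_isUnit_add hsum).resolve_left hb
  obtain ⟨ε, rfl⟩ := hε
  obtain ⟨b, rfl⟩ : IsUnit b := isUnit_pow_iff two_ne_zero |>.1 (isUnit_of_mul_isUnit_right hnb)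
  have hmem : (↑b⁻¹ : A) ^ 2 - -(↑ε⁻¹ * n) ∈ IsLocalRing.maximalIdeal A := by
    convert Ideal.mul_mem_left _ ((↑b⁻¹ : A) ^ 2 * ↑ε⁻¹) ((IsLocalRing.mem_maximalIdeal _).2 hb)
      using 1
    linear_combination (-(↑b⁻¹ : A) ^ 2) * ε.inv_mul -
        (n * ↑ε⁻¹) * (↑b⁻¹ * b + 1) * b.inv_mul
  obtain ⟨s, hs⟩ := exists_sq_eq_of_sub_mem_maximalIdeal h2 b⁻¹.isUnit hmem
  have hn : n = -(ε * s ^ 2) := by rw [hs]; simp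
  refine ⟨s, ?_, hn⟩
  have hunit : IsUnit (ε * s ^ 2) := by
    rw [← IsUnit.neg_iff, ← hn]
    exact isUnit_of_mul_isUnit_left hnb
  exact (isUnit_pow_iff two_ne_zero).1 (isUnit_of_mul_isUnit_right hunit)

/-- An isometric embedding of `⟨A⟩ ⊥ ⟨B⟩ ⊥ ⟨-B s²⟩` into the `2 × 2` matrices with the determinant
form: the last two summands form the hyperbolic plane `B (y - s z) (y + s z)`. -/
def detEmbedding {K : Type*} [CommRing K] (A B s : K) :
    ((Fin 2 → K) × K) →ₗ[K] Matrix (Fin 2) (Fin 2) K where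
  toFun v := !![v.1 0, -B * (v.1 1 - s * v.2); v.1 1 + s * v.2, A * v.1 0]
  map_add' v w := by
    ext i j
    fin_cases i <;> fin_cases j <;> simp <;> ring
  map_smul' c v := by
    ext i j
    fin_cases i <;> fin_cases j <;> simp <;> ring

lemma det_detEmbedding {K : Type*} [CommRing K] (A B s : K) (v : (Fin 2 → K) × K) :
    (detEmbedding A B s v).det =
      ((Matrix.toQuadraticForm' !![A, 0; 0, B]).prod (-(B * s ^ 2) • QuadraticMap.sq)) v := by
  change Matrix.det !![_, _; _, _] = _
  simp only [Matrix.det_fin_two_of, QuadraticMap.prod_apply, toQuadraticForm'_apply_eq_sum,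
    Fin.sum_univ_two, Matrix.of_apply, Matrix.cons_val', Matrix.cons_val_fin_one,
    Matrix.cons_val_zero, Matrix.cons_val_one, smul_apply, QuadraticMap.sq_apply,
    smul_eq_mul]
  ring

lemma detEmbedding_injective {K : Type*} [Field K] (h2 : (2 : K) ≠ 0) (A : K) {B s : K}
    (hB : B ≠ 0) (hs : s ≠ 0) : Injective (detEmbedding A B s) := by
  rw [injective_iff_map_eq_zero]
  intro v hv
  have hx : v.1 0 = 0 := congrFun₂ hv 0 0
  have hminus : v.1 1 - s * v.2 = 0 :=
    (mul_eq_zero.1 (congrFun₂ hv 0 1)).resolve_left (neg_ne_zero.2 hB)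
  have hplus : v.1 1 + s * v.2 = 0 := congrFun₂ hv 1 0
  have hy : v.1 1 = 0 := by
    refine (mul_eq_zero.1 ?_).resolve_left h2
    linear_combination hminus + hplus
  have hz : v.2 = 0 := by simpa [hy, hs] using hplus
  exact Prod.ext (funext (Fin.forall_fin_two.2 ⟨hx, hy⟩)) hz

variable {p : ℕ} [Fact p.Prime]

lemma isUnit_two_padicInt (hodd : Odd p) : IsUnit (2 : ℤ_[p]) :=
  PadicInt.isUnit_iff.2 (by
    exact_mod_cast PadicInt.norm_natCast_eq_one_iff.2 (Nat.coprime_two_right.2 hodd))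

lemma isUnit_add_mul_sq_of_not_embeds (hodd : Odd p) {ε n : ℤ_[p]} (hε : IsUnit ε)
    {A : ℚ_[p]} (hani : ¬ ∃ f : ((Fin 2 → ℚ_[p]) × ℚ_[p]) →ₗ[ℚ_[p]] Matrix (Fin 2) (Fin 2) ℚ_[p],
      Injective f ∧ ∀ v, (f v).det =
        ((Matrix.toQuadraticForm' !![A, 0; 0, ε * (p : ℚ_[p]) ^ 2]).prod
          (((p : ℚ_[p]) ^ 2 * n) • QuadraticMap.sq)) v) (b : ℤ_[p]) :
    IsUnit (ε + n * b ^ 2) := by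
  by_contra hb
  obtain ⟨s, hs, rfl⟩ := exists_eq_neg_mul_sq_of_not_isUnit (isUnit_two_padicInt hodd) hε hb
  have hp0 : (p : ℚ_[p]) ≠ 0 := NeZero.ne _
  refine hani ⟨detEmbedding A (ε * p ^ 2) s, detEmbedding_injective two_ne_zero A
    (mul_ne_zero (PadicInt.coe_ne_zero.2 hε.ne_zero) (pow_ne_zero 2 hp0))
    (PadicInt.coe_ne_zero.2 hs.ne_zero), fun v => ?_⟩
  rw [det_detEmbedding]
  congr 3
  push_cast
  ring

end Anisotropy

section LocalDensity

/-- The local density polynomial `Den⁺_{Δ(N_k)}(X, M) = 1 + pX + (p - 1)X² - pX³ - pX⁴`. -/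
def levelDensity (p : ℝ) : Polynomial ℝ :=
  Polynomial.C 1 + Polynomial.C p * Polynomial.X + Polynomial.C (p - 1) * Polynomial.X ^ 2 -
    Polynomial.C p * Polynomial.X ^ 3 - Polynomial.C p * Polynomial.X ^ 4

lemma eval_levelDensity (p x : ℝ) :
    (levelDensity p).eval x = (1 + x) * (1 - x) * (1 + p * x + p * x ^ 2) := by
  simp only [levelDensity, Polynomial.eval_add, Polynomial.eval_sub, Polynomial.eval_mul,
    Polynomial.eval_pow, Polynomial.eval_C, Polynomial.eval_X]
  ring

lemma neg_eval_one_derivative_levelDensity (p : ℝ) :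
    -((levelDensity p).derivative.eval 1) = 4 * p + 2 := by
  simp only [levelDensity, Polynomial.derivative_sub, Polynomial.derivative_add,
    Polynomial.derivative_C, Polynomial.derivative_C_mul, Polynomial.derivative_X_pow,
    Polynomial.derivative_X, Polynomial.eval_sub, Polynomial.eval_add, Polynomial.eval_mul,
    Polynomial.eval_pow, Polynomial.eval_C, Polynomial.eval_X, Polynomial.eval_one,
    Polynomial.eval_zero, Nat.cast_ofNat]
  ring

lemma polynomial_eq_of_eval_pow_eq {P Q : Polynomial ℝ} {q : ℝ} (hq0 : 0 < q) (hq1 : q ≠ 1)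
    (h : ∀ m : ℕ, P.eval (q ^ m) = Q.eval (q ^ m)) : P = Q :=
  Polynomial.eq_of_infinite_eval_eq P Q
    ((Set.infinite_range_of_injective (pow_right_injective₀ hq0 hq1)).mono
      (Set.range_subset_iff.2 h))

variable {p : ℕ} [Fact p.Prime] {ε₁ ε₂ n : ℤ_[p]}

lemma repCount_level (hε₁ : IsUnit ε₁) (hε₂ : ∀ b, IsUnit (ε₂ + n * b ^ 2)) {d : ℕ} (hd : 3 ≤ d)
    (m : ℕ) :
    (repCount (p : ℤ_[p]) d ((delta ℤ_[p] (p ^ 2 * n)).prod (hyp ℤ_[p] m))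
        (gramOf (Matrix.toQuadraticForm' !![ε₁ * p, 0; 0, ε₂ * p ^ 2])) : ℝ) =
      (p : ℝ) ^ (d * (4 * m + 3)) *
        ((levelDensity p).eval ((p : ℝ)⁻¹ ^ m) * (1 - (p : ℝ)⁻¹ ^ (m + 1))) := by
  have hsurj : Surjective (PadicInt.toZModPow (p := p) d) := ZMod.ringHom_surjective _
  have hker (a : ℤ_[p]) : PadicInt.toZModPow d a = 0 ↔ (p : ℤ_[p]) ^ d ∣ a := by
    rw [← RingHom.mem_ker, PadicInt.ker_toZModPow, Ideal.mem_span_singleton]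
  have hunit : ∀ b, IsUnit (PadicInt.toZModPow d ε₂ + PadicInt.toZModPow d n * b ^ 2) :=
    hsurj.forall.2 fun b => by simpa using (hε₂ b).map (PadicInt.toZModPow d)
  rw [repCount_delta_prod_hyp hsurj hker]
  simp only [map_mul, map_pow, map_natCast]
  rw [card_gramSet_levelForm hd (hε₁.map _) hunit, eval_levelDensity]

lemma tendsto_repCount_level (hε₁ : IsUnit ε₁) (hε₂ : ∀ b, IsUnit (ε₂ + n * b ^ 2)) (m : ℕ) :
    Tendsto (fun d : ℕ =>
        (repCount (p : ℤ_[p]) d ((delta ℤ_[p] (p ^ 2 * n)).prod (hyp ℤ_[p] m))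
          (gramOf (Matrix.toQuadraticForm' !![ε₁ * p, 0; 0, ε₂ * p ^ 2])) : ℝ) /
          (p : ℝ) ^ (d * (4 * m + 3)))
      atTop (nhds ((levelDensity p).eval ((p : ℝ)⁻¹ ^ m) * (1 - (p : ℝ)⁻¹ ^ (m + 1)))) := by
  refine tendsto_const_nhds.congr' ?_
  filter_upwards [eventually_ge_atTop 3] with d hd
  rw [repCount_level hε₁ hε₂ hd, mul_div_cancel_left₀ _ (pow_ne_zero _ (NeZero.ne _))]

end LocalDensity

end

end ASW

/-- Let `p` be an odd prime, `O = ℤ_p`, `q = p`.  Let `M = ℤ_p²` with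
`Q(x, y) = ε₁·p·x² + ε₂·p²·y²` (`ε₁, ε₂ ∈ ℤ_p^×`), and `N = p^{2k}·N₀` with `ν_p(N₀) ∈ {0,1}`
(i.e. `p² ∤ N₀`) and `k ≥ 1`; assume `(M ⊥ ⟨N⟩) ⊗ ℚ_p` is not isometric to a subspace of
`(M₂(ℚ_p), det)`.  If `P` is a real polynomial interpolating the local densities of `M` in
`δ(N) ⊥ H⁺_{2m}` (with the normalizing factor `1 - p^{-1-m}`, and `4m+3` the generic
dimension of the representation scheme), then
`P(X) = 1 + pX + (p-1)X² - pX³ - pX⁴`; in particular `-P′(1) = 4p + 2`. -/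
theorem statement16 (p : ℕ) [Fact p.Prime] (hodd : Odd p)
    (ε₁ ε₂ : ℤ_[p]) (hε₁ : IsUnit ε₁) (hε₂ : IsUnit ε₂)
    (k : ℕ) (hk : 1 ≤ k) (N₀ : ℤ_[p]) (hN₀ : ¬ (p : ℤ_[p]) ^ 2 ∣ N₀)
    (hani : ¬ ∃ f : ((Fin 2 → ℚ_[p]) × ℚ_[p]) →ₗ[ℚ_[p]] Matrix (Fin 2) (Fin 2) ℚ_[p],
      Function.Injective f ∧
        ∀ v, (f v).det =
          ((Matrix.toQuadraticMap'
              !![(ε₁ : ℚ_[p]) * (p : ℚ_[p]), 0; 0, (ε₂ : ℚ_[p]) * (p : ℚ_[p]) ^ 2]).prod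
            (((p : ℚ_[p]) ^ (2 * k) * (N₀ : ℚ_[p])) • QuadraticMap.sq)) v)
    (P : Polynomial ℝ)
    (hP : ∀ m : ℕ, Filter.Tendsto
      (fun d : ℕ =>
        (ASW.repCount (p : ℤ_[p]) d
            ((ASW.delta ℤ_[p] ((p : ℤ_[p]) ^ (2 * k) * N₀)).prod (ASW.hyp ℤ_[p] m))
            (ASW.gramOf (Matrix.toQuadraticMap'
              !![ε₁ * (p : ℤ_[p]), 0; 0, ε₂ * (p : ℤ_[p]) ^ 2])) : ℝ) /
          (p : ℝ) ^ (d * (4 * m + 3)))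
      Filter.atTop
      (nhds (P.eval (((p : ℝ)⁻¹) ^ m) * (1 - ((p : ℝ)⁻¹) ^ (m + 1))))) :
    P = Polynomial.C 1 + Polynomial.C (p : ℝ) * Polynomial.X +
        Polynomial.C ((p : ℝ) - 1) * Polynomial.X ^ 2 -
        Polynomial.C (p : ℝ) * Polynomial.X ^ 3 - Polynomial.C (p : ℝ) * Polynomial.X ^ 4 ∧
      -(P.derivative.eval 1) = 4 * (p : ℝ) + 2 := by
  obtain ⟨j, rfl⟩ := Nat.exists_eq_add_of_le hk
  set n : ℤ_[p] := (p : ℤ_[p]) ^ (2 * j) * N₀ with hn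
  have hN : (p : ℤ_[p]) ^ (2 * (1 + j)) * N₀ = p ^ 2 * n := by rw [hn]; ring
  have hNq : (p : ℚ_[p]) ^ (2 * (1 + j)) * N₀ = (p : ℚ_[p]) ^ 2 * n := by
    exact_mod_cast congrArg PadicInt.Coe.ringHom hN
  rw [hNq] at hani
  rw [hN] at hP
  have hunit (b : ℤ_[p]) : IsUnit (ε₂ + n * b ^ 2) :=
    ASW.isUnit_add_mul_sq_of_not_embeds hodd hε₂ hani b
  have hp1 : (p : ℝ)⁻¹ < 1 := inv_lt_one_of_one_lt₀ (by exact_mod_cast (Fact.out : p.Prime).one_lt)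
  have hp0 : 0 < (p : ℝ)⁻¹ := inv_pos.2 (by exact_mod_cast (Fact.out : p.Prime).pos)
  have hdensity : P = ASW.levelDensity p :=
    ASW.polynomial_eq_of_eval_pow_eq hp0 hp1.ne fun m =>
      mul_right_cancel₀ (sub_ne_zero.2 (pow_lt_one₀ hp0.le hp1 m.succ_ne_zero).ne')
        (tendsto_nhds_unique (hP m) (ASW.tendsto_repCount_level hε₁ hunit m))
  exact ⟨hdensity, hdensity ▸ ASW.neg_eval_one_derivative_levelDensity p⟩
end
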